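/- arXiv:quant-ph/0309186 — 6 statements merged into one kernel-verified Lean document; each statement's English description precedes it below -/
import Mathlib

section
/- For any pure three-qutrit state, with λ_1^{(a)} ≤ λ_2^{(a)} ≤ λ_3^{(a)} the increasingly ordered eigenvalues of the a-th one-particle reduced density matrix, both inequalities λ_3^{(3)} − λ_1^{(2)} ≤ λ_2^{(1)} + λ_3^{(1)} and λ_3^{(3)} − λ_1^{(2)} ≤ λ_2^{(1)} + λ_3^{(2)} hold. -/
open scoped BigOperators

/-- The one-particle reduced density matrix of the first qutrit. -/
noncomputable def rho1 (c : Fin 3 → Fin 3 → Fin 3 → ℂ) : Matrix (Fin 3) (Fin 3) ℂ :=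
  Matrix.of fun i i' => ∑ j : Fin 3, ∑ k : Fin 3, c i j k * (starRingEnd ℂ) (c i' j k)

/-- The one-particle reduced density matrix of the second qutrit. -/
noncomputable def rho2 (c : Fin 3 → Fin 3 → Fin 3 → ℂ) : Matrix (Fin 3) (Fin 3) ℂ :=
  Matrix.of fun j j' => ∑ i : Fin 3, ∑ k : Fin 3, c i j k * (starRingEnd ℂ) (c i j' k)

/-- The one-particle reduced density matrix of the third qutrit. -/
noncomputable def rho3 (c : Fin 3 → Fin 3 → Fin 3 → ℂ) : Matrix (Fin 3) (Fin 3) ℂ :=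
  Matrix.of fun k k' => ∑ i : Fin 3, ∑ j : Fin 3, c i j k * (starRingEnd ℂ) (c i j k')

/-- `l` lists the eigenvalues of the Hermitian matrix `M` in increasing order. -/
def IsOrderedSpectrum (M : Matrix (Fin 3) (Fin 3) ℂ) (l : Fin 3 → ℝ) : Prop :=
  Monotone l ∧ ∃ hM : M.IsHermitian, ∃ σ : Equiv.Perm (Fin 3),
    ∀ i, l i = hM.eigenvalues (σ i)

open ComplexConjugate in
lemma spec_data (M : Matrix (Fin 3) (Fin 3) ℂ) (l : Fin 3 → ℝ) (h : IsOrderedSpectrum M l) :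
    ∃ u : Fin 3 → Fin 3 → ℂ,
      (∀ x : Fin 3 → ℂ, (star x ⬝ᵥ M.mulVec x).re = ∑ m, l m * ‖∑ i, conj (u m i) * x i‖ ^ 2) ∧
      (∀ x : Fin 3 → ℂ, ∑ m, ‖∑ i, conj (u m i) * x i‖ ^ 2 = ∑ i, ‖x i‖ ^ 2) ∧
      (∀ m n, ∑ i, conj (u m i) * u n i = if m = n then 1 else 0) ∧
      (∑ m, l m = M.trace.re) := by
  obtain ⟨-, hM, σ, hσ⟩ := h
  let B := hM.eigenvectorBasis
  have hin : ∀ (x y : EuclideanSpace ℂ (Fin 3)), inner ℂ x y = ∑ i, conj (x i) * y i := by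
    intro x y
    simp [PiLp.inner_apply, mul_comm]
  have key : ∀ (m) (x : Fin 3 → ℂ), ∑ i, conj (B m i) * (M.mulVec x) i
      = hM.eigenvalues m * ∑ i, conj (B m i) * x i := by
    intro m x
    have h1 := hM.mulVec_eigenvectorBasis m
    have h2 : star (M.mulVec (B m).ofLp) ⬝ᵥ x = (star (B m).ofLp) ⬝ᵥ M.mulVec x := by
      rw [Matrix.star_mulVec, hM.eq, Matrix.dotProduct_mulVec]
    rw [h1] at h2
    simp only [dotProduct, Pi.star_apply, Pi.smul_apply, star_smul] at h2
    simp only [Finset.mul_sum]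
    rw [show (∑ i, conj (B m i) * (M.mulVec x) i) = _ from h2.symm]
    refine Finset.sum_congr rfl fun i _ => ?_
    simp [B, mul_assoc]
  refine ⟨fun m i => B (σ m) i, ?_, ?_, ?_, ?_⟩
  · intro x
    have h := B.sum_inner_mul_inner (WithLp.toLp 2 x) (WithLp.toLp 2 (M.mulVec x))
    have h2 : star x ⬝ᵥ M.mulVec x = ∑ m, (hM.eigenvalues m * ‖∑ i, conj (B m i) * x i‖ ^ 2 : ℝ) := by
      rw [show star x ⬝ᵥ M.mulVec x = inner ℂ (WithLp.toLp 2 x) (WithLp.toLp 2 (M.mulVec x)) by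
        rw [hin]; rfl, ← h]
      push_cast
      refine Finset.sum_congr rfl fun m _ => ?_
      rw [hin (B m), ← inner_conj_symm, hin (B m)]
      simp only [key]
      rw [← Complex.conj_mul']
      ring
    rw [h2, Complex.ofReal_re, ← Equiv.sum_comp σ]
    simp only [hσ]
  · intro x
    have h := B.sum_sq_norm_inner_right (WithLp.toLp 2 x)
    rw [EuclideanSpace.norm_sq_eq] at h
    simp only [hin] at h
    rw [← Equiv.sum_comp σ] at h
    exact h
  · intro m n
    have h := orthonormal_iff_ite.1 B.orthonormal (σ m) (σ n)
    rw [hin] at h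
    simpa using h
  · rw [hM.trace_eq_sum_eigenvalues]
    simp only [hσ, Equiv.sum_comp σ hM.eigenvalues]
    simp

open ComplexConjugate in
lemma pythag (w a : Fin 3 → ℂ) (hw : ∑ k, conj (w k) * w k = 1) :
    ∑ k, ‖a k‖ ^ 2 = ‖∑ k, conj (w k) * a k‖ ^ 2
      + ∑ k, ‖a k - (∑ k, conj (w k) * a k) * w k‖ ^ 2 := by
  apply Complex.ofReal_injective
  push_cast
  simp only [← Complex.conj_mul']
  simp only [Fin.sum_univ_three, map_add, map_sub, map_mul, Complex.conj_conj] at *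
  generalize conj (w 0) = v0 at *
  generalize conj (w 1) = v1 at *
  generalize conj (w 2) = v2 at *
  generalize conj (a 0) = b0 at *
  generalize conj (a 1) = b1 at *
  generalize conj (a 2) = b2 at *
  linear_combination (-(v0 * a 0 + v1 * a 1 + v2 * a 2) * (w 0 * b0 + w 1 * b1 + w 2 * b2)) * hw

lemma cs3 (a b : Fin 3 → ℂ) : ‖∑ i, a i * b i‖ ^ 2 ≤ (∑ i, ‖a i‖ ^ 2) * ∑ i, ‖b i‖ ^ 2 := by
  refine le_trans ?_ (Finset.sum_mul_sq_le_sq_mul_sq Finset.univ (fun i => ‖a i‖) (fun i => ‖b i‖))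
  gcongr
  exact (norm_sum_le _ _).trans (by simp)

open ComplexConjugate in
lemma qf1 (c : Fin 3 → Fin 3 → Fin 3 → ℂ) (x : Fin 3 → ℂ) :
    (star x ⬝ᵥ (rho1 c).mulVec x).re = ∑ j, ∑ k, ‖∑ i, conj (x i) * c i j k‖ ^ 2 := by
  rw [← Complex.ofReal_re (∑ j, ∑ k, _)]
  congr 1
  push_cast
  simp only [← Complex.mul_conj']
  simp only [dotProduct, Matrix.mulVec, rho1, Matrix.of_apply, Pi.star_apply, Fin.sum_univ_three,
    map_add, map_mul, Complex.conj_conj, RCLike.star_def]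
  ring

lemma qf2 (c : Fin 3 → Fin 3 → Fin 3 → ℂ) (y : Fin 3 → ℂ) :
    (star y ⬝ᵥ (rho2 c).mulVec y).re
      = ∑ i, ∑ k, ‖∑ j, (starRingEnd ℂ) (y j) * c i j k‖ ^ 2 :=
  qf1 (fun i j k => c j i k) y

lemma qf3 (c : Fin 3 → Fin 3 → Fin 3 → ℂ) (y : Fin 3 → ℂ) :
    (star y ⬝ᵥ (rho3 c).mulVec y).re
      = ∑ i, ∑ j, ‖∑ k, (starRingEnd ℂ) (y k) * c i j k‖ ^ 2 :=
  qf1 (fun k i j => c i j k) y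

lemma tr1 (c : Fin 3 → Fin 3 → Fin 3 → ℂ) :
    (rho1 c).trace.re = ∑ i, ∑ j, ∑ k, ‖c i j k‖ ^ 2 := by
  simp only [Matrix.trace, Matrix.diag, rho1, Matrix.of_apply, Complex.mul_conj']
  norm_cast

open ComplexConjugate in
lemma main_ineq (c : Fin 3 → Fin 3 → Fin 3 → ℂ)
    (hnorm : ∑ i : Fin 3, ∑ j : Fin 3, ∑ k : Fin 3, ‖c i j k‖ ^ 2 = 1)
    (a b g : Fin 3 → ℝ)
    (h1 : IsOrderedSpectrum (rho1 c) a)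
    (h2 : IsOrderedSpectrum (rho2 c) b)
    (h3 : IsOrderedSpectrum (rho3 c) g) (k : Fin 3) : b k ≤ a k + (1 - g 2) := by
  obtain ⟨u, hu1, hu2, hu3, -⟩ := spec_data _ _ h1
  obtain ⟨v, hv1, hv2, hv3, -⟩ := spec_data _ _ h2
  obtain ⟨t, ht1, ht2, ht3, -⟩ := spec_data _ _ h3
  set w := t 2 with hw
  have hww : ∑ k, conj (w k) * w k = 1 := by simpa using ht3 2 2
  set Φ : Fin 3 → Fin 3 → ℂ := fun i j => ∑ k, conj (w k) * c i j k with hΦ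
  have hg : g 2 = ∑ i, ∑ j, ‖Φ i j‖ ^ 2 := by
    rw [← qf3, ht1]
    simp only [hw, ht3]
    simp [Fin.sum_univ_three]
  set d : Fin 3 → Fin 3 → Fin 3 → ℂ := fun i j k => c i j k - Φ i j * w k with hd
  have hdn : ∑ i, ∑ j, ∑ k, ‖d i j k‖ ^ 2 = 1 - g 2 := by
    rw [← hnorm, hg]
    simp only [hd, hΦ]
    simp only [fun i j => pythag w (c i j) hww, Finset.sum_add_distrib]
    ring
  -- (i)
  have hi : ∀ x : Fin 3 → ℂ, ∑ j, ‖∑ i, conj (x i) * Φ i j‖ ^ 2 ≤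
      ∑ m, a m * ‖∑ i, conj (u m i) * x i‖ ^ 2 := by
    intro x
    rw [← hu1, qf1]
    refine Finset.sum_le_sum fun j _ => ?_
    rw [pythag w (fun k => ∑ i, conj (x i) * c i j k) hww]
    have : ∑ k, conj (w k) * ∑ i, conj (x i) * c i j k = ∑ i, conj (x i) * Φ i j := by
      simp only [hΦ, Fin.sum_univ_three]; ring
    rw [this]
    have : 0 ≤ ∑ k, ‖(∑ i, conj (x i) * c i j k) - (∑ i, conj (x i) * Φ i j) * w k‖ ^ 2 := by
      positivity
    linarith
  have hii : ∀ y : Fin 3 → ℂ, ∑ m, b m * ‖∑ i, conj (v m i) * y i‖ ^ 2 ≤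
      ∑ i, ‖∑ j, conj (y j) * Φ i j‖ ^ 2 + (1 - g 2) * ∑ j, ‖y j‖ ^ 2 := by
    intro y
    rw [← hv1, qf2, ← hdn, Finset.sum_mul, ← Finset.sum_add_distrib]
    refine Finset.sum_le_sum fun i _ => ?_
    rw [pythag w (fun k => ∑ j, conj (y j) * c i j k) hww]
    have : ∑ k, conj (w k) * ∑ j, conj (y j) * c i j k = ∑ j, conj (y j) * Φ i j := by
      simp only [hΦ, Fin.sum_univ_three]; ring
    rw [this]
    gcongr
    rw [Finset.sum_comm, Finset.sum_mul]
    refine Finset.sum_le_sum fun k _ => ?_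
    have : (∑ j, conj (y j) * c i j k) - (∑ j, conj (y j) * Φ i j) * w k
        = ∑ j, conj (y j) * d i j k := by
      simp only [hd, Fin.sum_univ_three]; ring
    rw [this, mul_comm]
    simpa using cs3 (fun j => conj (y j)) (fun j => d i j k)
  -- the vector
  obtain ⟨p, hp0, hp⟩ : ∃ p : Fin 3 → ℂ, p ≠ 0 ∧ (Matrix.of fun m j =>
      if m < k then v m j else if k < m then ∑ i, conj (u m i) * Φ i j else 0).mulVec p = 0 := by
    apply Matrix.exists_mulVec_eq_zero_iff.2
    apply Matrix.det_eq_zero_of_row_eq_zero k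
    simp
  set z : Fin 3 → ℂ := fun i => ∑ j, p j * Φ i j with hz
  have hpv : ∀ m, m < k → ∑ j, conj (v m j) * conj (p j) = 0 := by
    intro m hm
    have := congrArg conj (congrFun hp m)
    simpa [Matrix.mulVec, dotProduct, hm] using this
  have hpu : ∀ m, k < m → ∑ i, conj (u m i) * z i = 0 := by
    intro m hm
    have := congrFun hp m
    simp only [Matrix.mulVec, dotProduct, Matrix.of_apply, hm, hm.not_gt, if_true, if_false,
      Pi.zero_apply] at this
    rw [← this]
    simp only [hz, Fin.sum_univ_three]; ring
  have hppos : 0 < ∑ j, ‖p j‖ ^ 2 := by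
    obtain ⟨j, hj⟩ := Function.ne_iff.1 hp0
    exact Finset.sum_pos' (fun _ _ => by positivity) ⟨j, Finset.mem_univ _, by
      have : 0 < ‖p j‖ := norm_pos_iff.2 hj
      positivity⟩
  have e1 : b k * ∑ j, ‖p j‖ ^ 2 ≤ ∑ i, ‖z i‖ ^ 2 + (1 - g 2) * ∑ j, ‖p j‖ ^ 2 := by
    have h := hii (fun j => conj (p j))
    have h' := hv2 (fun j => conj (p j))
    simp only [Complex.conj_conj, RCLike.norm_conj] at h h'
    refine le_trans ?_ h
    rw [← h', Finset.mul_sum]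
    refine Finset.sum_le_sum fun m _ => ?_
    rcases lt_or_ge m k with hm | hm
    · simp [hpv m hm]
    · gcongr
      exact h2.1 hm
  have e2 : ∑ j, ‖∑ i, conj (z i) * Φ i j‖ ^ 2 ≤ a k * ∑ i, ‖z i‖ ^ 2 := by
    refine (hi z).trans ?_
    rw [← hu2 z, Finset.mul_sum]
    refine Finset.sum_le_sum fun m _ => ?_
    rcases lt_or_ge k m with hm | hm
    · simp [hpu m hm]
    · gcongr
      exact h1.1 hm
  have e3 : (∑ i, ‖z i‖ ^ 2) ^ 2 ≤ (∑ j, ‖p j‖ ^ 2) * ∑ j, ‖∑ i, conj (z i) * Φ i j‖ ^ 2 := by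
    refine le_trans (le_of_eq ?_) (cs3 p (fun j => ∑ i, conj (z i) * Φ i j))
    have : ∑ j, p j * ∑ i, conj (z i) * Φ i j = ((∑ i, ‖z i‖ ^ 2 : ℝ) : ℂ) := by
      push_cast
      simp only [← Complex.conj_mul']
      have : ∀ i, conj (z i) * z i = conj (z i) * ∑ j, p j * Φ i j := fun i => rfl
      simp only [this]
      generalize (fun i => conj (z i)) = q
      simp only [Fin.sum_univ_three]; ring
    rw [this, Complex.norm_real, Real.norm_eq_abs, sq_abs]
  have ha : 0 ≤ a k := by
    have h := hi (u k)
    simp only [hu3] at h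
    have h' : ∑ m, a m * ‖(if m = k then 1 else 0 : ℂ)‖ ^ 2 = a k := by
      rw [Finset.sum_eq_single k] <;> simp +contextual
    rw [h'] at h
    exact le_trans (by positivity) h
  have e4 : ∑ i, ‖z i‖ ^ 2 ≤ a k * ∑ j, ‖p j‖ ^ 2 := by
    have hz0 : 0 ≤ ∑ i, ‖z i‖ ^ 2 := by positivity
    rcases hz0.eq_or_lt with h | h
    · rw [← h]; positivity
    · have := e3.trans (mul_le_mul_of_nonneg_left e2 hppos.le)
      refine le_of_mul_le_mul_right ?_ h
      linarith
  refine le_of_mul_le_mul_right ?_ hppos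
  linarith

theorem three_qutrit_prop2 (c : Fin 3 → Fin 3 → Fin 3 → ℂ)
    (hnorm : ∑ i : Fin 3, ∑ j : Fin 3, ∑ k : Fin 3, ‖c i j k‖ ^ 2 = 1)
    (l : Fin 3 → Fin 3 → ℝ)
    (h1 : IsOrderedSpectrum (rho1 c) (l 0))
    (h2 : IsOrderedSpectrum (rho2 c) (l 1))
    (h3 : IsOrderedSpectrum (rho3 c) (l 2)) :
    l 2 2 - l 1 0 ≤ l 0 1 + l 0 2 ∧ l 2 2 - l 1 0 ≤ l 0 1 + l 1 2 := by
  have hs : ∑ i : Fin 3, ∑ j : Fin 3, ∑ k : Fin 3, ‖c j i k‖ ^ 2 = 1 := by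
    rw [Finset.sum_comm]; exact hnorm
  have h3s : rho3 (fun i j k => c j i k) = rho3 c := by
    ext k k'
    simp only [rho3, Matrix.of_apply]
    rw [Finset.sum_comm]
  have A := main_ineq c hnorm _ _ _ h1 h2 h3 1
  have B := main_ineq (fun i j k => c j i k) hs _ _ _ h2 h1 (h3s ▸ h3) 0
  obtain ⟨-, -, -, -, T1⟩ := spec_data _ _ h1
  obtain ⟨-, -, -, -, T2⟩ := spec_data _ _ h2
  rw [tr1, hnorm, Fin.sum_univ_three] at T1
  rw [show rho2 c = rho1 (fun i j k => c j i k) from rfl, tr1, hs, Fin.sum_univ_three] at T2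
  constructor <;> linarith
end

section
/- For any pure three-qutrit state, with λ_1^{(a)} ≤ λ_2^{(a)} ≤ λ_3^{(a)} the increasingly ordered eigenvalues of the a-th one-particle reduced density matrix, the inequality 2λ_2^{(a)} + λ_1^{(a)} ≤ 2λ_2^{(b)} + λ_1^{(b)} + 2λ_2^{(c)} + λ_1^{(c)} holds for every permutation (a,b,c) of (1,2,3). -/
open scoped BigOperators

open Matrix

/-- Rotate the first leg of a tensor by the adjoint of `U`. -/
noncomputable def rotLeg (U : Matrix (Fin 3) (Fin 3) ℂ) (c : Fin 3 → Fin 3 → Fin 3 → ℂ) :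
    Fin 3 → Fin 3 → Fin 3 → ℂ :=
  fun i j k => ∑ a : Fin 3, (starRingEnd ℂ) (U a i) * c a j k

lemma unitary_inner (U : Matrix (Fin 3) (Fin 3) ℂ) (hU : U * Uᴴ = 1) (v w : Fin 3 → ℂ) :
    ∑ i : Fin 3, (∑ a : Fin 3, (starRingEnd ℂ) (U a i) * v a) *
      (starRingEnd ℂ) (∑ a : Fin 3, (starRingEnd ℂ) (U a i) * w a)
      = ∑ i : Fin 3, v i * (starRingEnd ℂ) (w i) := by
  have key : ∀ a b : Fin 3, ∑ i : Fin 3, U b i * (starRingEnd ℂ) (U a i) = if b = a then 1 else 0 := by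
    intro a b
    have := congrFun (congrFun hU b) a
    simpa [Matrix.mul_apply, Matrix.one_apply] using this
  calc _ = ∑ i : Fin 3, ∑ a : Fin 3, ∑ b : Fin 3,
        (v a * (starRingEnd ℂ) (w b)) * (U b i * (starRingEnd ℂ) (U a i)) := by
        refine Finset.sum_congr rfl fun i _ => ?_
        rw [map_sum, Finset.sum_mul_sum]
        refine Finset.sum_congr rfl fun a _ => Finset.sum_congr rfl fun b _ => ?_
        simp only [map_mul, Complex.conj_conj]
        ring
    _ = ∑ a : Fin 3, ∑ b : Fin 3, (v a * (starRingEnd ℂ) (w b)) *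
          ∑ i : Fin 3, U b i * (starRingEnd ℂ) (U a i) := by
        rw [Finset.sum_comm]
        refine Finset.sum_congr rfl fun a _ => ?_
        rw [Finset.sum_comm]
        refine Finset.sum_congr rfl fun b _ => ?_
        rw [Finset.mul_sum]
    _ = _ := by simp [key]

lemma rho1_rot (U : Matrix (Fin 3) (Fin 3) ℂ) (c : Fin 3 → Fin 3 → Fin 3 → ℂ) :
    rho1 (rotLeg U c) = Uᴴ * rho1 c * U := by
  ext i i'
  simp only [rho1, rotLeg, Matrix.of_apply, Matrix.mul_apply, Matrix.conjTranspose_apply]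
  calc _ = ∑ j : Fin 3, ∑ k : Fin 3, ∑ b : Fin 3, ∑ a : Fin 3,
        star (U a i) * (c a j k * (starRingEnd ℂ) (c b j k)) * U b i' := by
        refine Finset.sum_congr rfl fun j _ => Finset.sum_congr rfl fun k _ => ?_
        rw [map_sum, Finset.sum_mul_sum, Finset.sum_comm]
        refine Finset.sum_congr rfl fun a _ => Finset.sum_congr rfl fun b _ => ?_
        simp only [map_mul, starRingEnd_apply, star_star]
        ring
    _ = _ := by
        simp only [Fin.sum_univ_three]
        ring

lemma rho2_rot (U : Matrix (Fin 3) (Fin 3) ℂ) (hU : U * Uᴴ = 1)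
    (c : Fin 3 → Fin 3 → Fin 3 → ℂ) : rho2 (rotLeg U c) = rho2 c := by
  ext j j'
  simp only [rho2, rotLeg, Matrix.of_apply]
  rw [Finset.sum_comm, Finset.sum_comm (f := fun i k => c i j k * _)]
  exact Finset.sum_congr rfl fun k _ =>
    unitary_inner U hU (fun a => c a j k) (fun a => c a j' k)

lemma rho3_rot (U : Matrix (Fin 3) (Fin 3) ℂ) (hU : U * Uᴴ = 1)
    (c : Fin 3 → Fin 3 → Fin 3 → ℂ) : rho3 (rotLeg U c) = rho3 c := by
  ext j j'
  simp only [rho3, rotLeg, Matrix.of_apply]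
  rw [Finset.sum_comm, Finset.sum_comm (f := fun i k => c i k j * _)]
  exact Finset.sum_congr rfl fun k _ =>
    unitary_inner U hU (fun a => c a k j) (fun a => c a k j')

def sw12 (c : Fin 3 → Fin 3 → Fin 3 → ℂ) : Fin 3 → Fin 3 → Fin 3 → ℂ := fun i j k => c j i k
def sw13 (c : Fin 3 → Fin 3 → Fin 3 → ℂ) : Fin 3 → Fin 3 → Fin 3 → ℂ := fun i j k => c k j i

lemma rho1_sw12 (c : Fin 3 → Fin 3 → Fin 3 → ℂ) : rho1 (sw12 c) = rho2 c := rfl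
lemma rho2_sw12 (c : Fin 3 → Fin 3 → Fin 3 → ℂ) : rho2 (sw12 c) = rho1 c := rfl
lemma rho3_sw12 (c : Fin 3 → Fin 3 → Fin 3 → ℂ) : rho3 (sw12 c) = rho3 c := by
  ext k k'
  simp only [rho3, sw12, Matrix.of_apply]
  rw [Finset.sum_comm]
lemma rho1_sw13 (c : Fin 3 → Fin 3 → Fin 3 → ℂ) : rho1 (sw13 c) = rho3 c := by
  ext k k'
  simp only [rho1, rho3, sw13, Matrix.of_apply]
  rw [Finset.sum_comm]
lemma rho2_sw13 (c : Fin 3 → Fin 3 → Fin 3 → ℂ) : rho2 (sw13 c) = rho2 c := by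
  ext k k'
  simp only [rho2, sw13, Matrix.of_apply]
  rw [Finset.sum_comm]
lemma rho3_sw13 (c : Fin 3 → Fin 3 → Fin 3 → ℂ) : rho3 (sw13 c) = rho1 c := by
  ext k k'
  simp only [rho1, rho3, sw13, Matrix.of_apply]
  rw [Finset.sum_comm]

lemma rho1_diag_re (d : Fin 3 → Fin 3 → Fin 3 → ℂ) (i : Fin 3) :
    (rho1 d i i).re = ∑ j : Fin 3, ∑ k : Fin 3, Complex.normSq (d i j k) := by
  simp only [rho1, Matrix.of_apply, Complex.re_sum, Complex.mul_conj, Complex.ofReal_re]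

lemma rho2_diag_re (d : Fin 3 → Fin 3 → Fin 3 → ℂ) (j : Fin 3) :
    (rho2 d j j).re = ∑ i : Fin 3, ∑ k : Fin 3, Complex.normSq (d i j k) := by
  simp only [rho2, Matrix.of_apply, Complex.re_sum, Complex.mul_conj, Complex.ofReal_re]

lemma rho3_diag_re (d : Fin 3 → Fin 3 → Fin 3 → ℂ) (k : Fin 3) :
    (rho3 d k k).re = ∑ i : Fin 3, ∑ j : Fin 3, Complex.normSq (d i j k) := by
  simp only [rho3, Matrix.of_apply, Complex.re_sum, Complex.mul_conj, Complex.ofReal_re]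

/-- The quadratic form of a diagonal reduced density matrix. -/
lemma quad_form (d : Fin 3 → Fin 3 → Fin 3 → ℂ) (α : Fin 3 → ℝ)
    (h : rho1 d = Matrix.diagonal (fun i => (α i : ℂ))) (u : Fin 3 → ℂ) :
    ∑ j : Fin 3, ∑ k : Fin 3, Complex.normSq (∑ i : Fin 3, (starRingEnd ℂ) (u i) * d i j k)
      = ∑ i : Fin 3, Complex.normSq (u i) * α i := by
  have key : ((∑ j : Fin 3, ∑ k : Fin 3,
      Complex.normSq (∑ i : Fin 3, (starRingEnd ℂ) (u i) * d i j k) : ℝ) : ℂ)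
      = ∑ i : Fin 3, ∑ i' : Fin 3, (starRingEnd ℂ) (u i) * u i' * rho1 d i i' := by
    push_cast
    simp only [← Complex.mul_conj, rho1, Matrix.of_apply]
    simp only [Fin.sum_univ_three, map_add, map_mul, Complex.conj_conj]
    ring
  rw [h] at key
  apply Complex.ofReal_injective
  rw [key]
  push_cast
  refine Finset.sum_congr rfl fun i _ => ?_
  simp only [Matrix.diagonal_apply, mul_ite, mul_zero, Finset.sum_ite_eq, Finset.mem_univ, if_true]
  rw [← Complex.mul_conj]; ring

lemma exists_unit_ker (A B : ℂ) : ∃ x y : ℂ, Complex.normSq x + Complex.normSq y = 1 ∧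
    x * A + y * B = 0 := by
  by_cases h : Complex.normSq A + Complex.normSq B = 0
  · have hA : A = 0 := Complex.normSq_eq_zero.1
      (by nlinarith [Complex.normSq_nonneg A, Complex.normSq_nonneg B])
    have hB : B = 0 := Complex.normSq_eq_zero.1
      (by nlinarith [Complex.normSq_nonneg A, Complex.normSq_nonneg B])
    exact ⟨1, 0, by simp, by simp [hA, hB]⟩
  · have hpos : 0 < Complex.normSq A + Complex.normSq B :=
      lt_of_le_of_ne (add_nonneg (Complex.normSq_nonneg A) (Complex.normSq_nonneg B)) (Ne.symm h)
    set r := Real.sqrt (Complex.normSq A + Complex.normSq B) with hr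
    have hr2 : r * r = Complex.normSq A + Complex.normSq B := Real.mul_self_sqrt hpos.le
    refine ⟨B / r, -A / r, ?_, by ring⟩
    rw [Complex.normSq_div, Complex.normSq_div, Complex.normSq_neg, Complex.normSq_ofReal, hr2,
      ← add_div, add_comm, div_self h]

/-- A pair `(p, q)` parallel to a unit vector `(m, n)` has the same length as its projection. -/
lemma parallel_norm (m n p q : ℂ) (hn : Complex.normSq m + Complex.normSq n = 1)
    (h : p * n = q * m) :
    Complex.normSq p + Complex.normSq q =
      Complex.normSq ((starRingEnd ℂ) m * p + (starRingEnd ℂ) n * q) := by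
  apply Complex.ofReal_injective
  have hn' : m * (starRingEnd ℂ) m + n * (starRingEnd ℂ) n = 1 := by
    rw [Complex.mul_conj, Complex.mul_conj]; exact_mod_cast hn
  have h' : (starRingEnd ℂ) p * (starRingEnd ℂ) n = (starRingEnd ℂ) q * (starRingEnd ℂ) m := by
    rw [← map_mul, h, map_mul]
  push_cast
  simp only [← Complex.mul_conj, map_add, map_mul, Complex.conj_conj]
  linear_combination (-(p * (starRingEnd ℂ) p + q * (starRingEnd ℂ) q)) * hn'
    + (p * n - q * m) * h'

lemma core2 (d : Fin 3 → Fin 3 → Fin 3 → ℂ) (α : Fin 3 → ℝ) (hα : Monotone α)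
    (h : rho1 d = Matrix.diagonal (fun i => (α i : ℂ))) (m n : ℂ)
    (hn : Complex.normSq m + Complex.normSq n = 1)
    (h22 : d 2 2 2 * n = d 1 2 2 * m)
    (h21 : d 2 2 1 * n = d 1 2 1 * m)
    (h12 : d 2 1 2 * n = d 1 1 2 * m) :
    (rho2 d 2 2).re - (rho2 d 0 0).re + (rho3 d 2 2).re - (rho3 d 0 0).re
      ≤ 2 * α 2 + α 0 := by
  have a0 : α 0 = ∑ j : Fin 3, ∑ k : Fin 3, Complex.normSq (d 0 j k) := by
    rw [← rho1_diag_re, h]; simp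
  have a2 : α 2 = ∑ j : Fin 3, ∑ k : Fin 3, Complex.normSq (d 2 j k) := by
    rw [← rho1_diag_re, h]; simp
  have a2n : 0 ≤ α 2 := by
    rw [a2]; exact Finset.sum_nonneg fun _ _ => Finset.sum_nonneg fun _ _ => Complex.normSq_nonneg _
  have h01 : α 0 ≤ α 1 := hα (by decide)
  have h12' : α 1 ≤ α 2 := hα (by decide)
  have nn : ∀ i j k, 0 ≤ Complex.normSq (d i j k) := fun _ _ _ => Complex.normSq_nonneg _
  have q1 := quad_form d α h ![0, n, m]
  have q1' : Complex.normSq (d 2 2 2) + Complex.normSq (d 1 2 2)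
      + (Complex.normSq (d 2 2 1) + Complex.normSq (d 1 2 1))
      + (Complex.normSq (d 2 1 2) + Complex.normSq (d 1 1 2)) ≤ α 2 := by
    rw [parallel_norm m n _ _ hn h22, parallel_norm m n _ _ hn h21, parallel_norm m n _ _ hn h12]
    have hb : Complex.normSq n * α 1 + Complex.normSq m * α 2 ≤ α 2 := by
      nlinarith [Complex.normSq_nonneg n]
    have e : ∀ j k, ∑ i : Fin 3, (starRingEnd ℂ) ((![0, n, m] : Fin 3 → ℂ) i) * d i j k
        = (starRingEnd ℂ) m * d 2 j k + (starRingEnd ℂ) n * d 1 j k := by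
      intro j k; simp [Fin.sum_univ_three]; ring
    simp only [e] at q1
    have e2 : ∑ i : Fin 3, Complex.normSq ((![0, n, m] : Fin 3 → ℂ) i) * α i
        = Complex.normSq n * α 1 + Complex.normSq m * α 2 := by simp [Fin.sum_univ_three]
    rw [e2] at q1
    have nn' : ∀ j k, 0 ≤ Complex.normSq ((starRingEnd ℂ) m * d 2 j k + (starRingEnd ℂ) n * d 1 j k) :=
      fun _ _ => Complex.normSq_nonneg _
    simp only [Fin.sum_univ_three] at q1
    linarith [nn' 0 0, nn' 0 1, nn' 0 2, nn' 1 0, nn' 1 1, nn' 2 0]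
  have q2' : Complex.normSq (d 0 2 2) + Complex.normSq (d 1 2 2) + Complex.normSq (d 2 2 2) ≤ α 2 := by
    have q2 := quad_form d α h (fun i => d i 2 2)
    set N := Complex.normSq (d 0 2 2) + Complex.normSq (d 1 2 2) + Complex.normSq (d 2 2 2) with hN
    have hNn : 0 ≤ N := by linarith [nn 0 2 2, nn 1 2 2, nn 2 2 2]
    have e : Complex.normSq (∑ i : Fin 3, (starRingEnd ℂ) (d i 2 2) * d i 2 2) = N * N := by
      have : ∑ i : Fin 3, (starRingEnd ℂ) (d i 2 2) * d i 2 2 = (N : ℂ) := by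
        rw [hN]; push_cast
        simp only [Fin.sum_univ_three, ← Complex.mul_conj]; ring
      rw [this, Complex.normSq_ofReal]
    have l1 : N * N ≤ ∑ j : Fin 3, ∑ k : Fin 3,
        Complex.normSq (∑ i : Fin 3, (starRingEnd ℂ) (d i 2 2) * d i j k) := by
      rw [← e]
      refine le_trans ?_ (Finset.single_le_sum (f := fun j => ∑ k : Fin 3,
        Complex.normSq (∑ i : Fin 3, (starRingEnd ℂ) (d i 2 2) * d i j k))
        (fun _ _ => Finset.sum_nonneg fun _ _ => Complex.normSq_nonneg _) (Finset.mem_univ 2))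
      exact Finset.single_le_sum (f := fun k => 
        Complex.normSq (∑ i : Fin 3, (starRingEnd ℂ) (d i 2 2) * d i 2 k))
        (fun _ _ => Complex.normSq_nonneg _) (Finset.mem_univ 2)
    have l2 : N * N ≤ N * α 2 := by
      refine l1.trans ?_
      rw [q2, Fin.sum_univ_three, hN]
      nlinarith [nn 0 2 2, nn 1 2 2, nn 2 2 2]
    rcases hNn.eq_or_lt with h0 | h0
    · linarith
    · exact le_of_mul_le_mul_left l2 h0
  rw [rho2_diag_re, rho2_diag_re, rho3_diag_re, rho3_diag_re]
  simp only [Fin.sum_univ_three] at a0 ⊢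
  linarith [nn 0 0 0, nn 0 0 1, nn 0 0 2, nn 0 1 0, nn 0 1 1, nn 0 1 2, nn 0 2 0, nn 0 2 1,
    nn 0 2 2, nn 1 0 0, nn 1 0 1, nn 1 0 2, nn 1 1 0, nn 1 1 1, nn 1 1 2, nn 1 2 0, nn 1 2 1,
    nn 1 2 2, nn 2 0 0, nn 2 0 1, nn 2 0 2, nn 2 1 0, nn 2 1 1, nn 2 1 2, nn 2 2 0, nn 2 2 1,
    nn 2 2 2]

/-- Unitary mixing the two lowest levels. -/
noncomputable def mixU (x y : ℂ) : Matrix (Fin 3) (Fin 3) ℂ :=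
  !![-y, (starRingEnd ℂ) x, 0; x, (starRingEnd ℂ) y, 0; 0, 0, 1]

lemma mixU_unitary (x y : ℂ) (h : Complex.normSq x + Complex.normSq y = 1) :
    mixU x y * (mixU x y)ᴴ = 1 := by
  have h' : x * (starRingEnd ℂ) x + y * (starRingEnd ℂ) y = 1 := by
    rw [Complex.mul_conj, Complex.mul_conj]; exact_mod_cast h
  ext i j
  fin_cases i <;> fin_cases j <;>
    simp [mixU, Matrix.mul_apply, Fin.sum_univ_three] <;>
    first
      | linear_combination h'
      | ring1

lemma mixU_diag (x y : ℂ) (h : Complex.normSq x + Complex.normSq y = 1) (β : Fin 3 → ℝ)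
    (hβ : Monotone β) :
    (((mixU x y)ᴴ * Matrix.diagonal (fun i => (β i : ℂ)) * mixU x y) 2 2).re = β 2 ∧
    (((mixU x y)ᴴ * Matrix.diagonal (fun i => (β i : ℂ)) * mixU x y) 0 0).re ≤ β 1 := by
  have h01 : β 0 ≤ β 1 := hβ (by decide)
  constructor
  · simp [mixU, Matrix.mul_apply, Fin.sum_univ_three, Matrix.diagonal_apply]
  · simp [mixU, Matrix.mul_apply, Fin.sum_univ_three, Matrix.diagonal_apply]
    simp only [Complex.normSq_apply] at h
    have h4 := mul_nonneg (add_nonneg (mul_self_nonneg y.re) (mul_self_nonneg y.im))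
      (sub_nonneg.2 h01)
    have h5 : (x.re * x.re + x.im * x.im + (y.re * y.re + y.im * y.im)) * β 1 = β 1 := by
      rw [h, one_mul]
    linarith

lemma core1 (d : Fin 3 → Fin 3 → Fin 3 → ℂ) (α β γ : Fin 3 → ℝ)
    (hα : Monotone α) (hβ : Monotone β) (hγ : Monotone γ)
    (h1 : rho1 d = Matrix.diagonal (fun i => (α i : ℂ)))
    (h2 : rho2 d = Matrix.diagonal (fun i => (β i : ℂ)))
    (h3 : rho3 d = Matrix.diagonal (fun i => (γ i : ℂ))) :
    β 2 - β 1 + γ 2 - γ 1 ≤ 2 * α 2 + α 0 := by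
  obtain ⟨n, m, hn, hv⟩ := exists_unit_ker (d 2 2 2) (-d 1 2 2)
  obtain ⟨x, y, hxy, hx⟩ := exists_unit_ker (d 2 0 2 * n - d 1 0 2 * m) (d 2 1 2 * n - d 1 1 2 * m)
  obtain ⟨z, w, hzw, hz⟩ := exists_unit_ker (d 2 2 0 * n - d 1 2 0 * m) (d 2 2 1 * n - d 1 2 1 * m)
  set V := mixU x y with hV
  set W := mixU z w with hW
  have uV := mixU_unitary x y hxy
  have uW := mixU_unitary z w hzw
  set e := sw12 (rotLeg V (sw12 d)) with he
  set f := sw13 (rotLeg W (sw13 e)) with hf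
  have e1 : rho1 e = rho1 d := by
    rw [he, rho1_sw12, rho2_rot V uV, rho2_sw12]
  have e2 : rho2 e = Vᴴ * rho2 d * V := by
    rw [he, rho2_sw12, rho1_rot, rho1_sw12]
  have e3 : rho3 e = rho3 d := by
    rw [he, rho3_sw12, rho3_rot V uV, rho3_sw12]
  have f1 : rho1 f = rho1 d := by
    rw [hf, rho1_sw13, rho3_rot W uW, rho3_sw13, e1]
  have f2 : rho2 f = Vᴴ * rho2 d * V := by
    rw [hf, rho2_sw13, rho2_rot W uW, rho2_sw13, e2]
  have f3 : rho3 f = Wᴴ * rho3 d * W := by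
    rw [hf, rho3_sw13, rho1_rot, rho1_sw13, e3]
  have key := core2 f α hα (f1.trans h1) m n (by rw [add_comm]; exact hn)
    (by
      simp [hf, he, sw12, sw13, rotLeg, Fin.sum_univ_three, hV, hW, mixU]
      linear_combination hv)
    (by
      simp [hf, he, sw12, sw13, rotLeg, Fin.sum_univ_three, hV, hW, mixU]
      linear_combination hz)
    (by
      simp [hf, he, sw12, sw13, rotLeg, Fin.sum_univ_three, hV, hW, mixU]
      linear_combination hx)
  rw [f2, f3, h2, h3] at key
  obtain ⟨b2, b0⟩ := mixU_diag x y hxy β hβ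
  obtain ⟨c2, c0⟩ := mixU_diag z w hzw γ hγ
  rw [← hV] at b2 b0
  rw [← hW] at c2 c0
  linarith

lemma spectrum_diag (M : Matrix (Fin 3) (Fin 3) ℂ) (l : Fin 3 → ℝ) (h : IsOrderedSpectrum M l) :
    ∃ U : Matrix (Fin 3) (Fin 3) ℂ, U * Uᴴ = 1 ∧
      Uᴴ * M * U = Matrix.diagonal (fun i => (l i : ℂ)) := by
  obtain ⟨_, hM, σ, hσ⟩ := h
  set E : Matrix (Fin 3) (Fin 3) ℂ := (hM.eigenvectorUnitary : Matrix (Fin 3) (Fin 3) ℂ) with hE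
  have hE1 : E * Eᴴ = 1 := by
    rw [← Matrix.star_eq_conjTranspose]
    exact Unitary.coe_mul_star_self hM.eigenvectorUnitary
  have hE2 : Eᴴ * E = 1 := by
    rw [← Matrix.star_eq_conjTranspose]
    exact Unitary.coe_star_mul_self hM.eigenvectorUnitary
  have hs : Eᴴ * M * E = Matrix.diagonal (fun i => (hM.eigenvalues i : ℂ)) := by
    have : M = E * Matrix.diagonal (fun i => (hM.eigenvalues i : ℂ)) * Eᴴ := by
      have := hM.spectral_theorem
      simpa [Unitary.conjStarAlgAut_apply, Matrix.star_eq_conjTranspose, Function.comp_def] using this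
    calc Eᴴ * M * E = (Eᴴ * E) * Matrix.diagonal (fun i => (hM.eigenvalues i : ℂ)) * (Eᴴ * E) := by
          conv_lhs => rw [this]
          simp only [Matrix.mul_assoc]
      _ = _ := by rw [hE2]; simp
  refine ⟨E.submatrix id σ, ?_, ?_⟩
  · rw [Matrix.conjTranspose_submatrix, Matrix.submatrix_mul_equiv, hE1]; simp
  · have : (E.submatrix id σ)ᴴ * M * E.submatrix id σ = (Eᴴ * M * E).submatrix σ σ := by
      ext i j
      simp [Matrix.mul_apply]
    rw [this, hs]
    ext i j
    simp [Matrix.diagonal_apply, hσ]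

lemma spectrum_sum (M : Matrix (Fin 3) (Fin 3) ℂ) (l : Fin 3 → ℝ) (h : IsOrderedSpectrum M l) :
    l 0 + l 1 + l 2 = M.trace.re := by
  obtain ⟨U, hU, hd⟩ := spectrum_diag M l h
  have ht : (Uᴴ * M * U).trace = M.trace := by
    rw [Matrix.trace_mul_comm, ← Matrix.mul_assoc, hU, Matrix.one_mul]
  rw [← ht, hd, Matrix.trace_diagonal]
  simp [Fin.sum_univ_three]

lemma core0 (c : Fin 3 → Fin 3 → Fin 3 → ℂ) (α β γ : Fin 3 → ℝ)
    (h1 : IsOrderedSpectrum (rho1 c) α)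
    (h2 : IsOrderedSpectrum (rho2 c) β)
    (h3 : IsOrderedSpectrum (rho3 c) γ) :
    β 2 - β 1 + γ 2 - γ 1 ≤ 2 * α 2 + α 0 := by
  obtain ⟨U1, u1, d1⟩ := spectrum_diag _ _ h1
  obtain ⟨U2, u2, d2⟩ := spectrum_diag _ _ h2
  obtain ⟨U3, u3, d3⟩ := spectrum_diag _ _ h3
  refine core1 (sw13 (rotLeg U3 (sw13 (sw12 (rotLeg U2 (sw12 (rotLeg U1 c))))))) α β γ
    h1.1 h2.1 h3.1 ?_ ?_ ?_
  · rw [rho1_sw13, rho3_rot U3 u3, rho3_sw13, rho1_sw12, rho2_rot U2 u2, rho2_sw12, rho1_rot, d1]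
  · rw [rho2_sw13, rho2_rot U3 u3, rho2_sw13, rho2_sw12, rho1_rot, rho1_sw12, rho2_rot U1 u1, d2]
  · rw [rho3_sw13, rho1_rot, rho1_sw13, rho3_sw12, rho3_rot U2 u2, rho3_sw12, rho3_rot U1 u1, d3]

theorem three_qutrit_ineq4 (c : Fin 3 → Fin 3 → Fin 3 → ℂ)
    (hnorm : ∑ i : Fin 3, ∑ j : Fin 3, ∑ k : Fin 3, ‖c i j k‖ ^ 2 = 1)
    (l : Fin 3 → Fin 3 → ℝ)
    (h1 : IsOrderedSpectrum (rho1 c) (l 0))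
    (h2 : IsOrderedSpectrum (rho2 c) (l 1))
    (h3 : IsOrderedSpectrum (rho3 c) (l 2)) :
    ∀ a b c' : Fin 3, a ≠ b → a ≠ c' → b ≠ c' →
      2 * l a 1 + l a 0 ≤ 2 * l b 1 + l b 0 + 2 * l c' 1 + l c' 0 := by
  have k1 := core0 c _ _ _ h1 h2 h3
  have k2 := core0 (sw12 c) (l 1) (l 0) (l 2) (by rw [rho1_sw12]; exact h2)
    (by rw [rho2_sw12]; exact h1) (by rw [rho3_sw12]; exact h3)
  have k3 := core0 (sw13 c) (l 2) (l 1) (l 0) (by rw [rho1_sw13]; exact h3)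
    (by rw [rho2_sw13]; exact h2) (by rw [rho3_sw13]; exact h1)
  have hn : ∑ i : Fin 3, ∑ j : Fin 3, ∑ k : Fin 3, Complex.normSq (c i j k) = 1 := by
    simpa only [Complex.normSq_eq_norm_sq] using hnorm
  have s1 := spectrum_sum _ _ h1
  have s2 := spectrum_sum _ _ h2
  have s3 := spectrum_sum _ _ h3
  simp only [Matrix.trace, Matrix.diag_apply, Complex.re_sum, rho1_diag_re] at s1
  simp only [Matrix.trace, Matrix.diag_apply, Complex.re_sum, rho2_diag_re] at s2
  simp only [Matrix.trace, Matrix.diag_apply, Complex.re_sum, rho3_diag_re] at s3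
  simp only [Fin.sum_univ_three] at hn s1 s2 s3
  have t1 : l 0 0 + l 0 1 + l 0 2 = 1 := by linarith
  have t2 : l 1 0 + l 1 1 + l 1 2 = 1 := by linarith
  have t3 : l 2 0 + l 2 1 + l 2 2 = 1 := by linarith
  clear s1 s2 s3 hn hnorm
  intro a b c' hab hac hbc
  fin_cases a <;> fin_cases b <;> fin_cases c' <;>
    first
      | exact absurd rfl hab
      | exact absurd rfl hac
      | exact absurd rfl hbc
      | (simp only [Fin.zero_eta, Fin.mk_one, Fin.reduceFinMk]; linarith)
end

section
/- For any pure three-qutrit state, with λ_1^{(a)} ≤ λ_2^{(a)} ≤ λ_3^{(a)} the increasingly ordered eigenvalues of the a-th one-particle reduced density matrix, the inequality 2λ_1^{(a)} + λ_2^{(a)} ≤ 2λ_2^{(b)} + λ_1^{(b)} + 2λ_1^{(c)} + λ_2^{(c)} holds for every permutation (a,b,c) of (1,2,3). -/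
open scoped BigOperators

open Matrix

namespace Qutrit

/-- change of basis on the first factor -/
noncomputable def act1 (F : Matrix (Fin 3) (Fin 3) ℂ) (c : Fin 3 → Fin 3 → Fin 3 → ℂ) :
    Fin 3 → Fin 3 → Fin 3 → ℂ := fun i j k => ∑ m, F i m * c m j k

/-- change of basis on the second factor -/
noncomputable def act2 (F : Matrix (Fin 3) (Fin 3) ℂ) (c : Fin 3 → Fin 3 → Fin 3 → ℂ) :
    Fin 3 → Fin 3 → Fin 3 → ℂ := fun i j k => ∑ m, F j m * c i m k

/-- change of basis on the third factor -/
noncomputable def act3 (F : Matrix (Fin 3) (Fin 3) ℂ) (c : Fin 3 → Fin 3 → Fin 3 → ℂ) :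
    Fin 3 → Fin 3 → Fin 3 → ℂ := fun i j k => ∑ m, F k m * c i j m

lemma rho1_act1 (F : Matrix (Fin 3) (Fin 3) ℂ) (c : Fin 3 → Fin 3 → Fin 3 → ℂ) :
    rho1 (act1 F c) = F * rho1 c * Fᴴ := by
  have h : ∀ d : Fin 3 → Fin 3 → Fin 3 → ℂ, rho1 d =
      (Matrix.of fun (i : Fin 3) (p : Fin 3 × Fin 3) => d i p.1 p.2) *
      (Matrix.of fun (i : Fin 3) (p : Fin 3 × Fin 3) => d i p.1 p.2)ᴴ := by
    intro d
    ext i i'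
    simp [rho1, Matrix.mul_apply, Fintype.sum_prod_type]
  have h2 : (Matrix.of fun (i : Fin 3) (p : Fin 3 × Fin 3) => act1 F c i p.1 p.2) =
      F * (Matrix.of fun (i : Fin 3) (p : Fin 3 × Fin 3) => c i p.1 p.2) := by
    ext i p
    simp [act1, Matrix.mul_apply]
  rw [h, h2, h c, Matrix.conjTranspose_mul]
  simp only [Matrix.mul_assoc]

lemma parseval (G : Matrix (Fin 3) (Fin 3) ℂ) (hG : Gᴴ * G = 1) (a b : Fin 3 → ℂ) :
    ∑ j, (∑ m, G j m * a m) * (starRingEnd ℂ) (∑ m, G j m * b m) =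
      ∑ j, a j * (starRingEnd ℂ) (b j) := by
  have h : (G *ᵥ a) ⬝ᵥ star (G *ᵥ b) = a ⬝ᵥ star b := by
    rw [Matrix.star_mulVec, dotProduct_comm, ← Matrix.dotProduct_mulVec, Matrix.mulVec_mulVec, hG,
      Matrix.one_mulVec, dotProduct_comm]
  simpa [Matrix.mulVec, dotProduct] using h

lemma rho1_act2 (G : Matrix (Fin 3) (Fin 3) ℂ) (hG : Gᴴ * G = 1)
    (c : Fin 3 → Fin 3 → Fin 3 → ℂ) : rho1 (act2 G c) = rho1 c := by
  ext i i'
  simp only [rho1, act2, Matrix.of_apply]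
  rw [Finset.sum_comm]
  conv_rhs => rw [Finset.sum_comm]
  exact Finset.sum_congr rfl fun k _ => parseval G hG (fun m => c i m k) (fun m => c i' m k)

lemma rho1_act3 (G : Matrix (Fin 3) (Fin 3) ℂ) (hG : Gᴴ * G = 1)
    (c : Fin 3 → Fin 3 → Fin 3 → ℂ) : rho1 (act3 G c) = rho1 c := by
  ext i i'
  simp only [rho1, act3, Matrix.of_apply]
  exact Finset.sum_congr rfl fun j _ => parseval G hG (fun m => c i j m) (fun m => c i' j m)

lemma rho2_act2 (F : Matrix (Fin 3) (Fin 3) ℂ) (c : Fin 3 → Fin 3 → Fin 3 → ℂ) :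
    rho2 (act2 F c) = F * rho2 c * Fᴴ :=
  rho1_act1 F (fun j i k => c i j k)

lemma rho3_act3 (F : Matrix (Fin 3) (Fin 3) ℂ) (c : Fin 3 → Fin 3 → Fin 3 → ℂ) :
    rho3 (act3 F c) = F * rho3 c * Fᴴ :=
  rho1_act1 F (fun k i j => c i j k)

lemma rho2_act1 (G : Matrix (Fin 3) (Fin 3) ℂ) (hG : Gᴴ * G = 1)
    (c : Fin 3 → Fin 3 → Fin 3 → ℂ) : rho2 (act1 G c) = rho2 c :=
  rho1_act2 G hG (fun j i k => c i j k)

lemma rho2_act3 (G : Matrix (Fin 3) (Fin 3) ℂ) (hG : Gᴴ * G = 1)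
    (c : Fin 3 → Fin 3 → Fin 3 → ℂ) : rho2 (act3 G c) = rho2 c :=
  rho1_act3 G hG (fun j i k => c i j k)

lemma rho3_act1 (G : Matrix (Fin 3) (Fin 3) ℂ) (hG : Gᴴ * G = 1)
    (c : Fin 3 → Fin 3 → Fin 3 → ℂ) : rho3 (act1 G c) = rho3 c :=
  rho1_act2 G hG (fun k i j => c i j k)

lemma rho3_act2 (G : Matrix (Fin 3) (Fin 3) ℂ) (hG : Gᴴ * G = 1)
    (c : Fin 3 → Fin 3 → Fin 3 → ℂ) : rho3 (act2 G c) = rho3 c :=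
  rho1_act3 G hG (fun k i j => c i j k)

lemma spectral (M : Matrix (Fin 3) (Fin 3) ℂ) (l : Fin 3 → ℝ) (h : IsOrderedSpectrum M l) :
    ∃ U : Matrix (Fin 3) (Fin 3) ℂ, Uᴴ * U = 1 ∧
      U * M * Uᴴ = Matrix.diagonal (fun i => (l i : ℂ)) := by
  obtain ⟨-, hM, σ, hσ⟩ := h
  set V : Matrix (Fin 3) (Fin 3) ℂ := (hM.eigenvectorUnitary : Matrix (Fin 3) (Fin 3) ℂ) with hV
  have h1 : Vᴴ * V = 1 := by
    have := Matrix.mem_unitaryGroup_iff'.1 hM.eigenvectorUnitary.2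
    simpa [Matrix.star_eq_conjTranspose] using this
  have h2 : V * Vᴴ = 1 := mul_eq_one_comm.1 h1
  have h3 : M = V * Matrix.diagonal (fun i => (hM.eigenvalues i : ℂ)) * Vᴴ := by
    have := hM.spectral_theorem
    rw [Unitary.conjStarAlgAut_apply] at this
    simpa [Matrix.star_eq_conjTranspose, Function.comp_def] using this
  have h4 : Vᴴ * M * V = Matrix.diagonal (fun i => (hM.eigenvalues i : ℂ)) := by
    conv_lhs => rw [h3]
    calc _ = (Vᴴ * V) * Matrix.diagonal (fun i => (hM.eigenvalues i : ℂ)) * (Vᴴ * V) := by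
            simp only [Matrix.mul_assoc]
      _ = _ := by rw [h1]; simp
  refine ⟨Vᴴ.submatrix σ id, ?_, ?_⟩
  · rw [Matrix.conjTranspose_submatrix, Matrix.conjTranspose_conjTranspose,
      Matrix.submatrix_mul_equiv V Vᴴ id σ id, h2]
    simp
  · have : Vᴴ.submatrix σ id * M * (Vᴴ.submatrix σ id)ᴴ = (Vᴴ * M * V).submatrix σ σ := by
      rw [Matrix.conjTranspose_submatrix, Matrix.conjTranspose_conjTranspose]
      ext i j
      simp [Matrix.mul_apply]
    rw [this, h4]
    ext i j
    simp [Matrix.diagonal_apply, hσ]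

lemma normalize3 (f : Fin 3 → ℂ) (hf : f ≠ 0) : ∃ s : ℂ, ∑ i, ‖s * f i‖ ^ 2 = 1 := by
  have hpos : 0 < ∑ i, ‖f i‖ ^ 2 := by
    obtain ⟨i, hi⟩ := Function.ne_iff.1 hf
    exact Finset.sum_pos' (fun _ _ => by positivity)
      ⟨i, Finset.mem_univ _, by have := norm_pos_iff.2 hi; positivity⟩
  refine ⟨((Real.sqrt (∑ i, ‖f i‖ ^ 2))⁻¹ : ℝ), ?_⟩
  simp only [norm_mul, mul_pow, ← Finset.mul_sum, Complex.norm_real, Real.norm_eq_abs, sq_abs,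
    inv_pow]
  rw [Real.sq_sqrt hpos.le]
  exact inv_mul_cancel₀ hpos.ne'

lemma unit_kernel3 (A : Matrix (Fin 3) (Fin 3) ℂ) (hA : A.det = 0) :
    ∃ f : Fin 3 → ℂ, (∑ i, ‖f i‖ ^ 2 = 1) ∧ ∀ j, ∑ i, f i * A j i = 0 := by
  obtain ⟨v, hv, h⟩ := Matrix.exists_mulVec_eq_zero_iff.2 hA
  obtain ⟨s, hs⟩ := normalize3 v hv
  refine ⟨fun i => s * v i, hs, fun j => ?_⟩
  have := congrFun h j
  simp only [Matrix.mulVec, dotProduct, Pi.zero_apply] at this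
  calc _ = s * ∑ i, A j i * v i := by
        rw [Finset.mul_sum]; exact Finset.sum_congr rfl fun i _ => by ring
    _ = 0 := by rw [this, mul_zero]

lemma unit_kernel2 (α β : ℂ) :
    ∃ x y : ℂ, ‖x‖ ^ 2 + ‖y‖ ^ 2 = 1 ∧ x * α + y * β = 0 := by
  by_cases h : α = 0 ∧ β = 0
  · exact ⟨1, 0, by simp, by simp [h.1, h.2]⟩
  · have hf : (![β, -α, 0] : Fin 3 → ℂ) ≠ 0 := by
      intro h0
      exact h ⟨by simpa using congrFun h0 1, by simpa using congrFun h0 0⟩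
    obtain ⟨s, hs⟩ := normalize3 _ hf
    refine ⟨s * β, s * (-α), ?_, by ring⟩
    simpa [Fin.sum_univ_three] using hs

lemma norm_sq_conj (z : ℂ) : z * (starRingEnd ℂ) z = ((‖z‖ ^ 2 : ℝ) : ℂ) := by
  rw [Complex.mul_conj, Complex.normSq_eq_norm_sq]

/-- an adapted orthonormal basis -/
lemma exists_flag (p q r : Fin 3 → ℂ) (h : (Matrix.of ![p, q, r]).det = 0) :
    ∃ F : Matrix (Fin 3) (Fin 3) ℂ, Fᴴ * F = 1 ∧ (∑ i, F 0 i * p i = 0) ∧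
      (∑ i, F 0 i * q i = 0) ∧ (∑ i, F 0 i * r i = 0) ∧ (∑ i, F 1 i * p i = 0) := by
  obtain ⟨f, hf, hf'⟩ := unit_kernel3 _ h
  obtain ⟨g, hg, hg'⟩ := unit_kernel3 (Matrix.of ![p, fun i => (starRingEnd ℂ) (f i), 0])
    (Matrix.det_eq_zero_of_row_eq_zero 2 (by simp))
  obtain ⟨k, hk, hk'⟩ := unit_kernel3
    (Matrix.of ![fun i => (starRingEnd ℂ) (f i), fun i => (starRingEnd ℂ) (g i), 0])
    (Matrix.det_eq_zero_of_row_eq_zero 2 (by simp))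
  have hgf := hg' 1
  have hkf := hk' 0
  have hkg := hk' 1
  simp only [Matrix.of_apply, Matrix.cons_val] at hgf hkf hkg
  have sw : ∀ a b : Fin 3 → ℂ, ∑ i, a i * (starRingEnd ℂ) (b i) = 0 →
      ∑ i, b i * (starRingEnd ℂ) (a i) = 0 := by
    intro a b hab
    have := congrArg (starRingEnd ℂ) hab
    simpa [map_sum, mul_comm] using this
  have un : ∀ a : Fin 3 → ℂ, ∑ i, ‖a i‖ ^ 2 = 1 →
      ∑ i, a i * (starRingEnd ℂ) (a i) = 1 := by
    intro a ha
    simp only [norm_sq_conj]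
    exact_mod_cast ha
  refine ⟨Matrix.of ![f, g, k], ?_, by simpa using hf' 0, by simpa using hf' 1,
    by simpa using hf' 2, by simpa using hg' 0⟩
  apply mul_eq_one_comm.1
  ext i j
  have e : ((Matrix.of ![f, g, k]) * (Matrix.of ![f, g, k])ᴴ) i j =
      ∑ m, (![f, g, k] i) m * (starRingEnd ℂ) ((![f, g, k] j) m) := by
    simp [Matrix.mul_apply]
  rw [e]
  fin_cases i <;> fin_cases j
  · simpa using un f hf
  · simpa using sw _ _ hgf
  · simpa using sw _ _ hkf
  · simpa using hgf
  · simpa using un g hg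
  · simpa using sw _ _ hkg
  · simpa using hkf
  · simpa using hkg
  · simpa using un k hk

lemma diag_conj_entry (W : Matrix (Fin 3) (Fin 3) ℂ) (l : Fin 3 → ℝ) (i : Fin 3) :
    (W * Matrix.diagonal (fun i => (l i : ℂ)) * Wᴴ) i i =
      ((∑ m, ‖W i m‖ ^ 2 * l m : ℝ) : ℂ) := by
  rw [Matrix.mul_apply]
  simp only [Matrix.mul_diagonal, Matrix.conjTranspose_apply]
  push_cast
  refine Finset.sum_congr rfl fun m _ => ?_
  have := norm_sq_conj (W i m)
  push_cast at this
  rw [← this]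
  simp only [Complex.star_def]
  ring

lemma unitary_rows (W : Matrix (Fin 3) (Fin 3) ℂ) (h : Wᴴ * W = 1) :
    (∀ i, ∑ m, ‖W i m‖ ^ 2 = 1) ∧ (∀ m, ∑ i, ‖W i m‖ ^ 2 = 1) := by
  have h' : W * Wᴴ = 1 := mul_eq_one_comm.1 h
  constructor
  · intro i
    have := congrFun (congrFun h' i) i
    simp only [Matrix.mul_apply, Matrix.conjTranspose_apply, Matrix.one_apply_eq,
      Complex.star_def, norm_sq_conj] at this
    exact_mod_cast this
  · intro m
    have := congrFun (congrFun h m) m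
    simp only [Matrix.mul_apply, Matrix.conjTranspose_apply, Matrix.one_apply_eq,
      Complex.star_def, mul_comm ((starRingEnd ℂ) _), norm_sq_conj] at this
    exact_mod_cast this

/-- variational bound -/
lemma lower_bound (M : Matrix (Fin 3) (Fin 3) ℂ) (l : Fin 3 → ℝ) (h : IsOrderedSpectrum M l)
    (F : Matrix (Fin 3) (Fin 3) ℂ) (hF : Fᴴ * F = 1) :
    2 * l 0 + l 1 ≤ 2 * ((F * M * Fᴴ) 0 0).re + ((F * M * Fᴴ) 1 1).re := by
  have h01 : l 0 ≤ l 1 := h.1 (by decide)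
  have h12 : l 1 ≤ l 2 := h.1 (by decide)
  obtain ⟨U, hU, hUM⟩ := spectral M l h
  have hW : (F * Uᴴ)ᴴ * (F * Uᴴ) = 1 := by
    rw [Matrix.conjTranspose_mul, Matrix.conjTranspose_conjTranspose]
    calc _ = U * (Fᴴ * F) * Uᴴ := by simp only [Matrix.mul_assoc]
      _ = 1 := by rw [hF, Matrix.mul_one]; exact mul_eq_one_comm.1 hU
  have hM : F * M * Fᴴ =
      (F * Uᴴ) * Matrix.diagonal (fun i => (l i : ℂ)) * (F * Uᴴ)ᴴ := by
    rw [← hUM, Matrix.conjTranspose_mul, Matrix.conjTranspose_conjTranspose]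
    calc _ = F * ((Uᴴ * U) * M * (Uᴴ * U)) * Fᴴ := by rw [hU]; simp
      _ = _ := by simp only [Matrix.mul_assoc]
  rw [hM, diag_conj_entry, diag_conj_entry, Complex.ofReal_re, Complex.ofReal_re]
  generalize F * Uᴴ = W at hW
  obtain ⟨hr, hc⟩ := unitary_rows W hW
  have r0 := hr 0
  have r1 := hr 1
  have c0 := hc 0
  have c1 := hc 1
  have c2 := hc 2
  simp only [Fin.sum_univ_three] at *
  have n : ∀ i j, 0 ≤ ‖W i j‖ ^ 2 := fun i j => by positivity
  generalize hN : (fun i j => ‖W i j‖ ^ 2) = N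
  have hN' : ∀ i j, ‖W i j‖ ^ 2 = N i j := fun i j => by rw [← hN]
  simp only [hN'] at *
  have e0 : N 0 0 = 1 - N 0 1 - N 0 2 := by linarith
  have e1 : N 1 0 = 1 - N 1 1 - N 1 2 := by linarith
  have k1 : 0 ≤ (l 1 - l 0) * (2 * N 0 1 + 2 * N 0 2 + N 1 1 + N 1 2 - 1) := by
    apply mul_nonneg (by linarith)
    have := n 2 0
    have := n 0 1
    have := n 0 2
    linarith
  have k2 : 0 ≤ (l 2 - l 1) * (2 * N 0 2 + N 1 2) := by
    apply mul_nonneg (by linarith)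
    have := n 0 2
    have := n 1 2
    linarith
  rw [e0, e1]
  nlinarith [k1, k2]

lemma rho1_diag (c : Fin 3 → Fin 3 → Fin 3 → ℂ) (i : Fin 3) :
    (rho1 c i i).re = ∑ j, ∑ k, ‖c i j k‖ ^ 2 := by
  have : rho1 c i i = ((∑ j, ∑ k, ‖c i j k‖ ^ 2 : ℝ) : ℂ) := by
    simp only [rho1, Matrix.of_apply, norm_sq_conj]
    push_cast
    rfl
  rw [this, Complex.ofReal_re]

lemma rho2_diag (c : Fin 3 → Fin 3 → Fin 3 → ℂ) (j : Fin 3) :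
    (rho2 c j j).re = ∑ i, ∑ k, ‖c i j k‖ ^ 2 :=
  rho1_diag (fun j i k => c i j k) j

lemma rho3_diag (c : Fin 3 → Fin 3 → Fin 3 → ℂ) (k : Fin 3) :
    (rho3 c k k).re = ∑ i, ∑ j, ‖c i j k‖ ^ 2 :=
  rho1_diag (fun k i j => c i j k) k

lemma main (c : Fin 3 → Fin 3 → Fin 3 → ℂ) (la lb lc : Fin 3 → ℝ)
    (h1 : IsOrderedSpectrum (rho1 c) la)
    (h2 : IsOrderedSpectrum (rho2 c) lb)
    (h3 : IsOrderedSpectrum (rho3 c) lc) :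
    2 * la 0 + la 1 ≤ 2 * lb 1 + lb 0 + 2 * lc 0 + lc 1 := by
  obtain ⟨G₀, hG₀, hd2⟩ := spectral _ _ h2
  obtain ⟨H, hH, hd3⟩ := spectral _ _ h3
  have hb : lb 0 ≤ lb 1 := h2.1 (by decide)
  set d := act2 G₀ (act3 H c) with hd
  have d1 : rho1 d = rho1 c := by rw [hd, rho1_act2 _ hG₀, rho1_act3 _ hH]
  have d2 : rho2 d = Matrix.diagonal (fun i => (lb i : ℂ)) := by
    rw [hd, rho2_act2, rho2_act3 _ hH, hd2]
  have d3 : rho3 d = Matrix.diagonal (fun i => (lc i : ℂ)) := by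
    rw [hd, rho3_act2 _ hG₀, rho3_act3, hd3]
  clear_value d
  obtain ⟨x, y, hxy, hdet⟩ := unit_kernel2
    (Matrix.of ![fun i => d i 2 2, fun i => d i 2 1, fun i => d i 0 2]).det
    (Matrix.of ![fun i => d i 2 2, fun i => d i 2 1, fun i => d i 1 2]).det
  have hxy' : x * (starRingEnd ℂ) x + y * (starRingEnd ℂ) y = 1 := by
    rw [norm_sq_conj, norm_sq_conj]; exact_mod_cast hxy
  let G : Matrix (Fin 3) (Fin 3) ℂ :=
    !![x, y, 0; -(starRingEnd ℂ) y, (starRingEnd ℂ) x, 0; 0, 0, 1]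
  have hG : Gᴴ * G = 1 := by
    apply mul_eq_one_comm.1
    ext i j
    fin_cases i <;> fin_cases j <;>
      simp [G, Matrix.mul_apply, Fin.sum_univ_three] <;>
      first | linear_combination hxy' | ring
  set e := act2 G d with he
  have e1 : rho1 e = rho1 c := by rw [he, rho1_act2 _ hG, d1]
  have e2 : rho2 e = G * Matrix.diagonal (fun i => (lb i : ℂ)) * Gᴴ := by
    rw [he, rho2_act2, d2]
  have e3 : rho3 e = Matrix.diagonal (fun i => (lc i : ℂ)) := by
    rw [he, rho3_act2 _ hG, d3]
  have eq0 : ∀ i k, e i 0 k = x * d i 0 k + y * d i 1 k := by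
    intro i k; simp [he, act2, G, Fin.sum_univ_three]
  have eq2 : ∀ i k, e i 2 k = d i 2 k := by
    intro i k; simp [he, act2, G, Fin.sum_univ_three]
  have hdet' : (Matrix.of ![fun i => e i 2 2, fun i => e i 2 1, fun i => e i 0 2]).det = 0 := by
    rw [← hdet]
    simp only [Matrix.det_fin_three, Matrix.of_apply, Matrix.cons_val, eq0, eq2]
    ring
  obtain ⟨F, hF, z1, z2, z3, z4⟩ := exists_flag _ _ _ hdet'
  set t := act1 F e with ht
  have t1 : rho1 t = F * rho1 c * Fᴴ := by rw [ht, rho1_act1, e1]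
  have t2 : rho2 t = G * Matrix.diagonal (fun i => (lb i : ℂ)) * Gᴴ := by
    rw [ht, rho2_act1 _ hF, e2]
  have t3 : rho3 t = Matrix.diagonal (fun i => (lc i : ℂ)) := by
    rw [ht, rho3_act1 _ hF, e3]
  replace z1 : t 0 2 2 = 0 := z1
  replace z2 : t 0 2 1 = 0 := z2
  replace z3 : t 0 0 2 = 0 := z3
  replace z4 : t 1 2 2 = 0 := z4
  clear_value t
  have key := lower_bound _ _ h1 F hF
  rw [← t1, rho1_diag, rho1_diag] at key
  have c0 := rho3_diag t 0
  have c1 := rho3_diag t 1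
  rw [t3] at c0 c1
  have b0 := rho2_diag t 0
  have b1 := rho2_diag t 1
  rw [t2, diag_conj_entry, Complex.ofReal_re] at b0 b1
  simp [G, Fin.sum_univ_three] at b0 b1
  simp only [Matrix.diagonal_apply_eq, Complex.ofReal_re] at c0 c1
  have hB : (‖x‖ ^ 2 * lb 0 + ‖y‖ ^ 2 * lb 1) + 2 * (‖y‖ ^ 2 * lb 0 + ‖x‖ ^ 2 * lb 1)
      ≤ 2 * lb 1 + lb 0 := by
    have hx : ‖x‖ ^ 2 = 1 - ‖y‖ ^ 2 := by linarith
    rw [hx]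
    nlinarith [mul_nonneg (sq_nonneg ‖y‖) (sub_nonneg.2 hb)]
  have n : ∀ i j k, 0 ≤ ‖t i j k‖ ^ 2 := fun i j k => by positivity
  simp only [Fin.sum_univ_three, z1, z2, z3, z4, norm_zero] at key c0 c1 b0 b1
  linarith [n 0 0 0, n 0 0 1, n 0 1 0, n 0 1 1, n 0 1 2, n 0 2 0, n 1 0 0, n 1 0 1, n 1 0 2,
    n 1 1 0, n 1 1 1, n 1 1 2, n 1 2 0, n 1 2 1, n 2 0 0, n 2 0 1, n 2 0 2, n 2 1 0, n 2 1 1,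
    n 2 1 2, n 2 2 0, n 2 2 1, n 2 2 2]

lemma rho_swap (c : Fin 3 → Fin 3 → Fin 3 → ℂ) :
    rho1 (fun i k j => c i j k) = rho1 c := by
  ext i i'
  simp only [rho1, Matrix.of_apply]
  exact Finset.sum_comm

end Qutrit

theorem three_qutrit_ineq5 (c : Fin 3 → Fin 3 → Fin 3 → ℂ)
    (hnorm : ∑ i : Fin 3, ∑ j : Fin 3, ∑ k : Fin 3, ‖c i j k‖ ^ 2 = 1)
    (l : Fin 3 → Fin 3 → ℝ)
    (h1 : IsOrderedSpectrum (rho1 c) (l 0))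
    (h2 : IsOrderedSpectrum (rho2 c) (l 1))
    (h3 : IsOrderedSpectrum (rho3 c) (l 2)) :
    ∀ a b c' : Fin 3, a ≠ b → a ≠ c' → b ≠ c' →
      2 * l a 0 + l a 1 ≤ 2 * l b 1 + l b 0 + 2 * l c' 0 + l c' 1 := by
  have r1 : rho1 (fun i k j => c i j k) = rho1 c := Qutrit.rho_swap c
  have r2 : rho1 (fun j k i => c i j k) = rho2 c := Qutrit.rho_swap (fun j i k => c i j k)
  have r3 : rho1 (fun k j i => c i j k) = rho3 c := Qutrit.rho_swap (fun k i j => c i j k)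
  have h1' := h1
  have h2' := h2
  have h3' := h3
  rw [← r1] at h1'
  rw [← r2] at h2'
  rw [← r3] at h3'
  have A := Qutrit.main c _ _ _ h1 h2 h3
  have B := Qutrit.main (fun i k j => c i j k) _ _ _ h1' h3 h2
  have C := Qutrit.main (fun j i k => c i j k) _ _ _ h2 h1 h3'
  have D := Qutrit.main (fun j k i => c i j k) _ _ _ h2' h3' h1
  have E := Qutrit.main (fun k i j => c i j k) _ _ _ h3 h1' h2'
  have F := Qutrit.main (fun k j i => c i j k) _ _ _ h3' h2' h1'
  intro a b c' hab hac hbc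
  fin_cases a <;> fin_cases b <;> fin_cases c' <;>
    first
    | exact absurd rfl hab
    | exact absurd rfl hac
    | exact absurd rfl hbc
    | exact A
    | exact B
    | exact C
    | exact D
    | exact E
    | exact F
end

section
/- For any pure three-qutrit state, with λ_1^{(a)} ≤ λ_2^{(a)} ≤ λ_3^{(a)} the increasingly ordered eigenvalues of the a-th one-particle reduced density matrix, the inequality 2λ_2^{(a)} + λ_3^{(a)} ≤ 2λ_2^{(b)} + λ_1^{(b)} + 2λ_2^{(c)} + λ_3^{(c)} holds for every permutation (a,b,c) of (1,2,3). -/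
open scoped BigOperators

/-- Euclidean 3-space over ℂ. -/
abbrev E3 := EuclideanSpace ℂ (Fin 3)

lemma spectrum_basis {M : Matrix (Fin 3) (Fin 3) ℂ} {l : Fin 3 → ℝ}
    (h : IsOrderedSpectrum M l) :
    ∃ v : OrthonormalBasis (Fin 3) ℂ E3, ∀ x : E3,
      inner ℂ x (Matrix.toEuclideanLin M x) = ((∑ i, l i * ‖inner ℂ (v i) x‖ ^ 2 : ℝ) : ℂ) := by
  obtain ⟨-, hM, σ, hσ⟩ := h
  refine ⟨hM.eigenvectorBasis.reindex σ.symm, fun x => ?_⟩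
  rw [← (hM.eigenvectorBasis.reindex σ.symm).sum_inner_mul_inner]
  push_cast
  refine Finset.sum_congr rfl fun i _ => ?_
  have h1 : inner ℂ ((hM.eigenvectorBasis.reindex σ.symm) i) (Matrix.toEuclideanLin M x)
      = (l i : ℂ) * inner ℂ ((hM.eigenvectorBasis.reindex σ.symm) i) x := by
    have hs := (Matrix.isSymmetric_toEuclideanLin_iff.2 hM)
    rw [← hs]
    have : Matrix.toEuclideanLin M ((hM.eigenvectorBasis.reindex σ.symm) i)
        = (l i : ℂ) • ((hM.eigenvectorBasis.reindex σ.symm) i) := by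
      have := hM.mulVec_eigenvectorBasis (σ i)
      ext j
      have := congrFun this j
      simpa [Matrix.toLpLin_apply, hσ i] using this
    rw [this, inner_smul_left]; simp
  rw [h1, ← inner_conj_symm x]
  have := Complex.conj_mul' (inner ℂ ((hM.eigenvectorBasis.reindex σ.symm) i) x)
  linear_combination (l i : ℂ) * this

lemma parseval (b : OrthonormalBasis (Fin 3) ℂ E3) (w : Fin 3 → ℂ) :
    ∑ m, ‖∑ j, b m j * w j‖ ^ 2 = ∑ j, ‖w j‖ ^ 2 := by
  have := b.sum_sq_norm_inner_left (WithLp.toLp 2 fun j => (starRingEnd ℂ) (w j))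
  rw [EuclideanSpace.norm_sq_eq] at this
  simp only [PiLp.inner_apply, RCLike.inner_apply, RCLike.norm_conj, RingHomCompTriple.comp_apply,
    RingHom.id_apply, Complex.conj_conj] at this
  rw [← this]

lemma exists_unit (p q : E3 →ₗ[ℂ] ℂ) : ∃ x : E3, ‖x‖ = 1 ∧ p x = 0 ∧ q x = 0 := by
  have h : LinearMap.ker (p.prod q) ≠ ⊥ := by
    apply LinearMap.ker_ne_bot_of_finrank_lt
    simp
  obtain ⟨x, hx, hx0⟩ := (Submodule.ne_bot_iff _).1 h
  replace hx : p x = 0 ∧ q x = 0 := by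
    have h' : (p x, q x) = (0, 0) := hx
    simpa using h'
  refine ⟨((‖x‖⁻¹ : ℝ) : ℂ) • x, ?_, ?_, ?_⟩
  · rw [norm_smul]; simp [hx0]
  · simp [hx.1]
  · simp [hx.2]

lemma exists_basis (s t : Fin 3) (hst : s ≠ t) (x y : E3) (hx : ‖x‖ = 1) (hy : ‖y‖ = 1)
    (hxy : inner ℂ x y = 0) :
    ∃ b : OrthonormalBasis (Fin 3) ℂ E3, b s = x ∧ b t = y := by
  have hyx : inner ℂ y x = 0 := inner_eq_zero_symm.1 hxy
  have ho : Orthonormal ℂ (({s, t} : Set (Fin 3)).domRestrict (fun i => if i = s then x else y)) := by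
    constructor
    · rintro ⟨i, hi⟩
      simp only [Set.domRestrict_apply]; split_ifs <;> assumption
    · rintro ⟨i, hi⟩ ⟨j, hj⟩ hij
      simp only [Set.domRestrict_apply]
      rcases hi with rfl | rfl <;> rcases hj with rfl | rfl <;>
        first | exact absurd rfl hij | simp [hst, hst.symm, hxy, hyx]
  obtain ⟨b, hb⟩ := ho.exists_orthonormalBasis_extension_of_card_eq (by simp)
  refine ⟨b, ?_, ?_⟩
  · rw [hb s (by simp)]; simp
  · rw [hb t (by simp)]; simp [hst.symm]

/-- The trilinear form attached to `c`. -/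
noncomputable def tri (c : Fin 3 → Fin 3 → Fin 3 → ℂ) (x y z : E3) : ℂ :=
  ∑ i, x i * ∑ j, y j * ∑ k, z k * (starRingEnd ℂ) (c i j k)

noncomputable def triA (c : Fin 3 → Fin 3 → Fin 3 → ℂ) (y z : E3) : E3 →ₗ[ℂ] ℂ where
  toFun x := tri c x y z
  map_add' a b := by simp [tri, Fin.sum_univ_three]; ring
  map_smul' a b := by simp [tri, Fin.sum_univ_three]; ring

noncomputable def triB (c : Fin 3 → Fin 3 → Fin 3 → ℂ) (x z : E3) : E3 →ₗ[ℂ] ℂ where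
  toFun y := tri c x y z
  map_add' a b := by simp [tri, Fin.sum_univ_three]; ring
  map_smul' a b := by simp [tri, Fin.sum_univ_three]; ring

noncomputable def triC (c : Fin 3 → Fin 3 → Fin 3 → ℂ) (x y : E3) : E3 →ₗ[ℂ] ℂ where
  toFun z := tri c x y z
  map_add' a b := by simp [tri, Fin.sum_univ_three]; ring
  map_smul' a b := by simp [tri, Fin.sum_univ_three]; ring

/-- Expectation value of the first reduced density matrix. -/
noncomputable def qA (c : Fin 3 → Fin 3 → Fin 3 → ℂ) (x : E3) : ℝ :=
  ∑ j, ∑ k, ‖∑ i, x i * (starRingEnd ℂ) (c i j k)‖ ^ 2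

lemma qA_eq_tri (c : Fin 3 → Fin 3 → Fin 3 → ℂ) (x : E3)
    (f g : OrthonormalBasis (Fin 3) ℂ E3) :
    qA c x = ∑ m, ∑ n, ‖tri c x (f m) (g n)‖ ^ 2 := by
  have h1 : ∀ m n, tri c x (f m) (g n)
      = ∑ j, f m j * ∑ k, g n k * ∑ i, x i * (starRingEnd ℂ) (c i j k) := by
    intro m n; simp only [tri, Fin.sum_univ_three]; ring
  simp only [h1]
  rw [Finset.sum_comm]
  simp only [parseval f]
  rw [Finset.sum_comm]
  simp only [parseval g]
  rfl

lemma tri_swap12 (c : Fin 3 → Fin 3 → Fin 3 → ℂ) (x y z : E3) :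
    tri (fun i j k => c j i k) y x z = tri c x y z := by
  simp only [tri, Fin.sum_univ_three]; ring

lemma tri_rot (c : Fin 3 → Fin 3 → Fin 3 → ℂ) (x y z : E3) :
    tri (fun k i j => c i j k) z x y = tri c x y z := by
  simp only [tri, Fin.sum_univ_three]; ring

lemma qA_inner (c : Fin 3 → Fin 3 → Fin 3 → ℂ) (x : E3) :
    ((qA c x : ℝ) : ℂ) = inner ℂ x (Matrix.toEuclideanLin (rho1 c) x) := by
  simp only [qA, Complex.ofReal_sum, Complex.ofReal_pow, ← Complex.conj_mul', PiLp.inner_apply,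
    Matrix.toLpLin_apply, rho1, Matrix.mulVec, dotProduct, Matrix.of_apply,
    RCLike.inner_apply, map_sum, map_mul, Complex.conj_conj]
  simp only [Fin.sum_univ_three]
  ring

lemma qA_trace (c : Fin 3 → Fin 3 → Fin 3 → ℂ) (e : OrthonormalBasis (Fin 3) ℂ E3) :
    ∑ m, qA c (e m) = ∑ j, ∑ k, ∑ i, ‖c i j k‖ ^ 2 := by
  simp only [qA]
  rw [Finset.sum_comm]
  refine Finset.sum_congr rfl fun j _ => ?_
  rw [Finset.sum_comm]
  refine Finset.sum_congr rfl fun k _ => ?_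
  rw [parseval]; simp

/-- All facts about one marginal, in an eigenbasis `v`. -/
lemma marginal (c : Fin 3 → Fin 3 → Fin 3 → ℂ) (l : Fin 3 → ℝ)
    (h : IsOrderedSpectrum (rho1 c) l) :
    l 0 ≤ l 1 ∧ l 1 ≤ l 2 ∧
    ∃ v : OrthonormalBasis (Fin 3) ℂ E3,
      qA c (v 0) = l 0 ∧ qA c (v 2) = l 2 ∧
      (∀ e : OrthonormalBasis (Fin 3) ℂ E3,
        qA c (e 0) + qA c (e 1) + qA c (e 2) = l 0 + l 1 + l 2) ∧
      (∀ x : E3, ‖x‖ = 1 → l 0 ≤ qA c x) ∧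
      (∀ x : E3, ‖x‖ = 1 → inner ℂ (v 0) x = 0 → l 1 ≤ qA c x) ∧
      (∀ x : E3, ‖x‖ = 1 → inner ℂ (v 2) x = 0 → qA c x ≤ l 1) := by
  have h01 : l 0 ≤ l 1 := h.1 (by decide)
  have h12 : l 1 ≤ l 2 := h.1 (by decide)
  obtain ⟨v, hv⟩ := spectrum_basis h
  have hq : ∀ x, qA c x = ∑ i, l i * ‖inner ℂ (v i) x‖ ^ 2 := by
    intro x
    have := (qA_inner c x).trans (hv x)
    exact_mod_cast this
  have hqv : ∀ m, qA c (v m) = l m := by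
    intro m
    rw [hq]
    simp [v.inner_eq_ite, apply_ite]
  have hP : ∀ x : E3, ‖x‖ = 1 →
      ‖inner ℂ (v 0) x‖ ^ 2 + ‖inner ℂ (v 1) x‖ ^ 2 + ‖inner ℂ (v 2) x‖ ^ 2 = 1 := by
    intro x hx
    have := v.sum_sq_norm_inner_right x
    rw [Fin.sum_univ_three] at this
    rw [this, hx]; norm_num
  refine ⟨h01, h12, v, hqv 0, hqv 2, ?_, ?_, ?_, ?_⟩
  · intro e
    have h1 := qA_trace c e
    rw [← qA_trace c v] at h1
    simpa [Fin.sum_univ_three, hqv] using h1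
  · intro x hx
    rw [hq, Fin.sum_univ_three]
    linear_combination mul_nonneg (sub_nonneg.2 h01) (sq_nonneg ‖inner ℂ (v 1) x‖)
      + mul_nonneg (sub_nonneg.2 (h01.trans h12)) (sq_nonneg ‖inner ℂ (v 2) x‖) - l 0 * hP x hx
  · intro x hx h0
    have hp := hP x hx
    rw [hq, Fin.sum_univ_three]
    rw [h0, norm_zero] at *
    linear_combination mul_nonneg (sub_nonneg.2 h12) (sq_nonneg ‖inner ℂ (v 2) x‖) - l 1 * hp
  · intro x hx h0
    have hp := hP x hx
    rw [hq, Fin.sum_univ_three]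
    rw [h0, norm_zero] at *
    linear_combination mul_nonneg (sub_nonneg.2 h01) (sq_nonneg ‖inner ℂ (v 0) x‖) + l 1 * hp

lemma rho1_swap (c : Fin 3 → Fin 3 → Fin 3 → ℂ) : rho1 (fun i j k => c j i k) = rho2 c := rfl

lemma rho1_rot_s8 (c : Fin 3 → Fin 3 → Fin 3 → ℂ) : rho1 (fun k i j => c i j k) = rho3 c := rfl

lemma key (c : Fin 3 → Fin 3 → Fin 3 → ℂ) (la lb lc : Fin 3 → ℝ)
    (h1 : IsOrderedSpectrum (rho1 c) la)
    (h2 : IsOrderedSpectrum (rho2 c) lb)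
    (h3 : IsOrderedSpectrum (rho3 c) lc) :
    2 * la 1 + la 2 ≤ 2 * lb 1 + lb 0 + 2 * lc 1 + lc 2 := by
  rw [← rho1_swap] at h2
  rw [← rho1_rot_s8] at h3
  obtain ⟨-, -, u, hu0, -, hutr, -, hu1, -⟩ := marginal _ _ h1
  obtain ⟨-, -, v, -, hv2, hvtr, -, -, hv1⟩ := marginal _ _ h2
  obtain ⟨-, -, w, -, -, hwtr, hw0, -, hw1⟩ := marginal _ _ h3
  obtain ⟨g0, hg0, hg01, hg02⟩ := exists_unit (triC c (u 1) (v 2)) (triC c (u 2) (v 2))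
  obtain ⟨g2, hg2, hg2w, hg20⟩ := exists_unit (innerSL ℂ (w 2)).toLinearMap
    (innerSL ℂ g0).toLinearMap
  obtain ⟨g, rfl, rfl⟩ := exists_basis 0 2 (by decide) g0 g2 hg0 hg2 hg20
  obtain ⟨e2, he2, he2u, he2T⟩ := exists_unit (innerSL ℂ (u 0)).toLinearMap (triA c (v 2) (g 1))
  obtain ⟨e, he0, rfl⟩ := exists_basis 0 2 (by decide) (u 0) e2 (u.orthonormal.1 0) he2 he2u
  obtain ⟨f1, hf1, hf1v, hf1T⟩ := exists_unit (innerSL ℂ (v 2)).toLinearMap (triB c (e 2) (g 0))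
  obtain ⟨f, hf0, rfl⟩ := exists_basis 0 1 (by decide) (v 2) f1 (v.orthonormal.1 2) hf1 hf1v
  -- the four vanishing components
  have hA : ∀ x : E3, inner ℂ (u 0) x = 0 → tri c x (f 0) (g 0) = 0 := by
    intro x hx
    change triA c (f 0) (g 0) x = 0
    rw [← u.sum_repr' x, Fin.sum_univ_three, hx]
    have h1 : triA c (f 0) (g 0) (u 1) = 0 := by rw [hf0]; exact hg01
    have h2 : triA c (f 0) (g 0) (u 2) = 0 := by rw [hf0]; exact hg02
    simp [h1, h2]
  have t100 : tri c (e 1) (f 0) (g 0) = 0 := hA _ (by rw [← he0]; simp [e.inner_eq_ite])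
  have t200 : tri c (e 2) (f 0) (g 0) = 0 := hA _ (by rw [← he0]; simp [e.inner_eq_ite])
  have t210 : tri c (e 2) (f 1) (g 0) = 0 := hf1T
  have t201 : tri c (e 2) (f 0) (g 1) = 0 := by rw [hf0]; exact he2T
  have qa := fun m => qA_eq_tri c (e m) f g
  have qb := fun m => qA_eq_tri (fun i j k => c j i k) (f m) e g
  have qc := fun m => qA_eq_tri (fun k i j => c i j k) (g m) e f
  simp only [tri_swap12] at qb
  simp only [tri_rot] at qc
  have b1 := hutr e
  have b2 := hvtr f
  have b3 := hwtr g
  have b4 := hu1 (e 2) he2 he2u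
  have b5 := hv1 (f 2) (f.orthonormal.1 2) (by rw [← hf0]; simp [f.inner_eq_ite])
  have b6 := hw0 (g 0) hg0
  have b7 := hw1 (g 2) hg2 hg2w
  rw [← he0] at hu0
  rw [← hf0] at hv2
  have main : qA c (e 1) + 2 * qA c (e 2) ≤
      qA (fun i j k => c j i k) (f 1) + 2 * qA (fun i j k => c j i k) (f 2)
      + qA (fun k i j => c i j k) (g 1) + 2 * qA (fun k i j => c i j k) (g 2) := by
    simp only [qa, qb, qc, Fin.sum_univ_three, t100, t200, t210, t201]
    have hn : ∀ i j k, 0 ≤ ‖tri c (e i) (f j) (g k)‖ ^ 2 := fun i j k => sq_nonneg _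
    simp only [norm_zero]
    linarith [hn 0 0 0, hn 0 0 1, hn 0 0 2, hn 0 1 0, hn 0 1 1, hn 0 1 2, hn 0 2 0, hn 0 2 1,
      hn 0 2 2, hn 1 0 1, hn 1 0 2, hn 1 1 0, hn 1 1 1, hn 1 1 2, hn 1 2 0, hn 1 2 1, hn 1 2 2,
      hn 2 0 2, hn 2 1 1, hn 2 1 2, hn 2 2 0, hn 2 2 1, hn 2 2 2]
  linarith

lemma key_swap (c : Fin 3 → Fin 3 → Fin 3 → ℂ) (la lb lc : Fin 3 → ℝ)
    (h1 : IsOrderedSpectrum (rho1 c) la)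
    (h2 : IsOrderedSpectrum (rho2 c) lb)
    (h3 : IsOrderedSpectrum (rho3 c) lc) :
    2 * la 1 + la 2 ≤ 2 * lc 1 + lc 0 + 2 * lb 1 + lb 2 := by
  refine key (fun i k j => c i j k) la lc lb ?_ ?_ ?_
  · convert h1 using 1
    ext i j; simp only [rho1, Matrix.of_apply]; rw [Finset.sum_comm]
  · exact h3
  · exact h2

theorem three_qutrit_ineq6 (c : Fin 3 → Fin 3 → Fin 3 → ℂ)
    (hnorm : ∑ i : Fin 3, ∑ j : Fin 3, ∑ k : Fin 3, ‖c i j k‖ ^ 2 = 1)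
    (l : Fin 3 → Fin 3 → ℝ)
    (h1 : IsOrderedSpectrum (rho1 c) (l 0))
    (h2 : IsOrderedSpectrum (rho2 c) (l 1))
    (h3 : IsOrderedSpectrum (rho3 c) (l 2)) :
    ∀ a b c' : Fin 3, a ≠ b → a ≠ c' → b ≠ c' →
      2 * l a 1 + l a 2 ≤ 2 * l b 1 + l b 0 + 2 * l c' 1 + l c' 2 := by
  have r2 : rho2 (fun j i k => c i j k) = rho1 c := rfl
  have rr : ∀ d : Fin 3 → Fin 3 → Fin 3 → ℂ, rho3 (fun j i k => d i j k) = rho3 d := by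
    intro d; ext i j; simp only [rho3, Matrix.of_apply]; rw [Finset.sum_comm]
  have r3 : rho2 (fun k i j => c i j k) = rho1 c := by
    ext i j; simp only [rho1, rho2, Matrix.of_apply]; rw [Finset.sum_comm]
  have r4 : rho3 (fun k i j => c i j k) = rho2 c := by
    ext i j; simp only [rho3, rho2, Matrix.of_apply]; rw [Finset.sum_comm]
  have k2 : IsOrderedSpectrum (rho3 (fun j i k => c i j k)) (l 2) := by rw [rr]; exact h3
  have k3 : IsOrderedSpectrum (rho2 (fun k i j => c i j k)) (l 0) := by rw [r3]; exact h1
  have k4 : IsOrderedSpectrum (rho3 (fun k i j => c i j k)) (l 1) := by rw [r4]; exact h2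
  have a1 := key c _ _ _ h1 h2 h3
  have a2 := key_swap c _ _ _ h1 h2 h3
  have a3 := key (fun j i k => c i j k) (l 1) (l 0) (l 2) h2 h1 k2
  have a4 := key_swap (fun j i k => c i j k) (l 1) (l 0) (l 2) h2 h1 k2
  have a5 := key (fun k i j => c i j k) (l 2) (l 0) (l 1) h3 k3 k4
  have a6 := key_swap (fun k i j => c i j k) (l 2) (l 0) (l 1) h3 k3 k4
  intro a b c' hab hac hbc
  fin_cases a <;> fin_cases b <;> fin_cases c' <;> first | exact absurd rfl hab | exact absurd rfl hac | exact absurd rfl hbc | assumption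
end

section
/- For any pure three-qutrit state, with λ_1^{(a)} ≤ λ_2^{(a)} ≤ λ_3^{(a)} the increasingly ordered eigenvalues of the a-th one-particle reduced density matrix, the inequality 2λ_2^{(a)} + λ_3^{(a)} ≤ 2λ_1^{(b)} + λ_2^{(b)} + 2λ_3^{(c)} + λ_2^{(c)} holds for every permutation (a,b,c) of (1,2,3). -/
open scoped BigOperators

namespace Qutrit

abbrev E := EuclideanSpace ℂ (Fin 3)
abbrev T3 := Fin 3 → Fin 3 → Fin 3 → ℂ

/-- full contraction of the tensor with three (conjugated) vectors -/
noncomputable def S (t : T3) (u v w : E) : ℂ :=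
  ∑ i, ∑ j, ∑ k, (starRingEnd ℂ) (u i) * (starRingEnd ℂ) (v j) * (starRingEnd ℂ) (w k) * t i j k

/-- quadratic form of the first reduced density matrix -/
noncomputable def q (t : T3) (u : E) : ℝ :=
  ∑ j, ∑ k, ‖∑ i, (starRingEnd ℂ) (u i) * t i j k‖ ^ 2

theorem inner_eq (x y : E) : inner ℂ x y = ∑ i, (starRingEnd ℂ) (x i) * y i := by
  simp [PiLp.inner_apply, mul_comm]

theorem parseval_s9 (b : OrthonormalBasis (Fin 3) ℂ E) (x : Fin 3 → ℂ) :
    ∑ i, ‖∑ k, (starRingEnd ℂ) (b i k) * x k‖ ^ 2 = ∑ k, ‖x k‖ ^ 2 := by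
  have h := b.sum_sq_norm_inner_right (WithLp.toLp 2 x)
  rw [EuclideanSpace.norm_sq_eq] at h
  simpa only [inner_eq] using h

theorem q_eq (t : T3) (u : E) (v w : OrthonormalBasis (Fin 3) ℂ E) :
    q t u = ∑ j, ∑ k, ‖S t u (v j) (w k)‖ ^ 2 := by
  have h1 : ∀ j, ∑ k, ‖S t u (v j) (w k)‖ ^ 2 =
      ∑ k, ‖∑ j', (starRingEnd ℂ) (v j j') * ∑ i, (starRingEnd ℂ) (u i) * t i j' k‖ ^ 2 := by
    intro j
    rw [← parseval_s9 w fun k =>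
      ∑ j', (starRingEnd ℂ) (v j j') * ∑ i, (starRingEnd ℂ) (u i) * t i j' k]
    refine Finset.sum_congr rfl fun k _ => ?_
    congr 2
    simp only [S, Fin.sum_univ_three]
    ring
  simp only [h1]
  rw [Finset.sum_comm]
  simp only [parseval_s9 v]
  rw [Finset.sum_comm]
  rfl

theorem q_sum (t : T3) (u : OrthonormalBasis (Fin 3) ℂ E) :
    ∑ i, q t (u i) = ∑ i, ∑ j, ∑ k, ‖t i j k‖ ^ 2 := by
  simp only [q]
  rw [Finset.sum_comm, Finset.sum_comm (f := fun i j => ∑ k, ‖t i j k‖ ^ 2)]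
  refine Finset.sum_congr rfl fun j _ => ?_
  rw [Finset.sum_comm, Finset.sum_comm (f := fun i k => ‖t i j k‖ ^ 2)]
  refine Finset.sum_congr rfl fun k _ => ?_
  exact parseval_s9 u fun i => t i j k

theorem q_rho (t : T3) (u : E) :
    (q t u : ℂ) = ∑ i, (starRingEnd ℂ) (u i) * ((rho1 t).mulVec u) i := by
  simp only [q, Complex.ofReal_sum, Complex.ofReal_pow, ← Complex.mul_conj', Matrix.mulVec,
    dotProduct, rho1, Matrix.of_apply]
  simp only [Fin.sum_univ_three, map_add, map_mul, Complex.conj_conj]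
  ring

theorem spec (M : Matrix (Fin 3) (Fin 3) ℂ) (l : Fin 3 → ℝ) (h : IsOrderedSpectrum M l) :
    ∃ e : OrthonormalBasis (Fin 3) ℂ E, ∀ v : E,
      ∑ i, (starRingEnd ℂ) (v i) * (M.mulVec v) i = ((∑ i, l i * ‖inner ℂ (e i) v‖ ^ 2 : ℝ) : ℂ) := by
  obtain ⟨-, hM, σ, hl⟩ := h
  refine ⟨hM.eigenvectorBasis.reindex σ.symm, fun v => ?_⟩
  set e := hM.eigenvectorBasis.reindex σ.symm with he
  have hev : ∀ i, M.mulVec (e i) = (l i : ℂ) • (e i : Fin 3 → ℂ) := by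
    intro i
    have := hM.mulVec_eigenvectorBasis (σ i)
    simp only [he, OrthonormalBasis.reindex_apply, Equiv.symm_symm, hl]
    rw [this]
    ext k
    simp
  have h1 : ∑ i, (starRingEnd ℂ) (v i) * (M.mulVec v) i
      = inner ℂ v (WithLp.toLp 2 (M.mulVec v) : E) := by rw [inner_eq]
  have h2 : ∀ i, inner ℂ (e i) (WithLp.toLp 2 (M.mulVec v) : E) = (l i : ℂ) * inner ℂ (e i) v := by
    intro i
    have ha : ∀ a b, (starRingEnd ℂ) (M a b) = M b a := fun a b => hM.apply b a
    have h3 : inner ℂ (e i) (WithLp.toLp 2 (M.mulVec v) : E)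
        = ∑ k, (starRingEnd ℂ) ((M.mulVec (e i)) k) * v k := by
      rw [inner_eq]
      simp only [Matrix.mulVec, dotProduct, Fin.sum_univ_three, map_add, map_mul, ha]
      ring
    rw [h3, hev, inner_eq, Finset.mul_sum]
    refine Finset.sum_congr rfl fun k _ => ?_
    simp [mul_assoc]
  rw [h1, ← e.sum_inner_mul_inner]
  push_cast
  refine Finset.sum_congr rfl fun i _ => ?_
  rw [h2, ← Complex.mul_conj', inner_conj_symm]
  ring

theorem bounds (a b c x y z : ℝ) (hab : a ≤ b) (hbc : b ≤ c) (hx : 0 ≤ x) (hy : 0 ≤ y)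
    (hz : 0 ≤ z) (h : x + y + z = 1) :
    a ≤ a * x + b * y + c * z ∧ a * x + b * y + c * z ≤ c := by
  have h1 := mul_nonneg (sub_nonneg.mpr hab) hx
  have h2 := mul_nonneg (sub_nonneg.mpr hab) hy
  have h3 := mul_nonneg (sub_nonneg.mpr hab) hz
  have h4 := mul_nonneg (sub_nonneg.mpr hbc) hx
  have h5 := mul_nonneg (sub_nonneg.mpr hbc) hy
  have h6 := mul_nonneg (sub_nonneg.mpr hbc) hz
  have hx' : x = 1 - y - z := by linarith
  subst hx'
  constructor <;> linarith

theorem spec_q (t : T3) (l : Fin 3 → ℝ) (h : IsOrderedSpectrum (rho1 t) l) :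
    ∃ e : OrthonormalBasis (Fin 3) ℂ E, (∀ i, q t (e i) = l i) ∧
      (∀ v : E, ‖v‖ = 1 → l 0 ≤ q t v ∧ q t v ≤ l 2) ∧
      (∀ v : E, ‖v‖ = 1 → inner ℂ (e 0) v = 0 → l 1 ≤ q t v) := by
  obtain ⟨e, he⟩ := spec _ l h
  have hm := h.1
  have h01 : l 0 ≤ l 1 := hm (by decide)
  have h12 : l 1 ≤ l 2 := hm (by decide)
  have hq : ∀ v, q t v = ∑ i, l i * ‖inner ℂ (e i) v‖ ^ 2 := by
    intro v
    have := (q_rho t v).trans (he v)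
    exact_mod_cast this
  have hn : ∀ v : E, ‖v‖ = 1 → ∑ i, ‖inner ℂ (e i) v‖ ^ 2 = 1 := by
    intro v hv
    rw [e.sum_sq_norm_inner_right, hv]; norm_num
  refine ⟨e, ?_, ?_, ?_⟩
  · intro i
    rw [hq]
    simp only [e.inner_eq_ite]
    fin_cases i <;> simp [Fin.sum_univ_three]
  · intro v hv
    have := hn v hv
    rw [hq]
    simp only [Fin.sum_univ_three] at *
    exact bounds _ _ _ _ _ _ h01 h12 (sq_nonneg _) (sq_nonneg _) (sq_nonneg _) this
  · intro v hv h0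
    have := hn v hv
    rw [hq]
    simp only [Fin.sum_univ_three, h0, norm_zero] at *
    have h3 := mul_nonneg (sub_nonneg.mpr h12) (sq_nonneg ‖inner ℂ (e 2) v‖)
    have h4 : ‖inner ℂ (e 1) v‖ ^ 2 = 1 - ‖inner ℂ (e 2) v‖ ^ 2 := by linarith
    rw [h4]
    linarith

theorem exists_orth (x y : E) : ∃ w : E, ‖w‖ = 1 ∧ inner ℂ x w = 0 ∧ inner ℂ y w = 0 := by
  have hlt : Module.finrank ℂ (Submodule.span ℂ ({x, y} : Set E)) < Module.finrank ℂ E := by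
    have h := finrank_span_finset_le_card (R := ℂ) ({x, y} : Finset E)
    have h2 : ({x, y} : Finset E).card ≤ 2 := Finset.card_le_two
    rw [Set.finrank, Finset.coe_insert, Finset.coe_singleton] at h
    rw [finrank_euclideanSpace_fin]
    omega
  have hne : (Submodule.span ℂ ({x, y} : Set E))ᗮ ≠ ⊥ := by
    intro hb
    rw [Submodule.orthogonal_eq_bot_iff] at hb
    rw [hb, finrank_top] at hlt
    exact lt_irrefl _ hlt
  obtain ⟨z, hz, hz0⟩ := Submodule.exists_mem_ne_zero_of_ne_bot hne
  rw [Submodule.mem_orthogonal] at hz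
  have hx := hz x (Submodule.subset_span (by simp))
  have hy := hz y (Submodule.subset_span (by simp))
  refine ⟨((‖z‖⁻¹ : ℝ) : ℂ) • z, ?_, ?_, ?_⟩
  · rw [norm_smul]
    simp [norm_ne_zero_iff.mpr hz0]
  · rw [inner_smul_right, hx, mul_zero]
  · rw [inner_smul_right, hy, mul_zero]

theorem exists_basis (x y : E) (hx : ‖x‖ = 1) (hy : ‖y‖ = 1) (hxy : inner ℂ x y = 0) :
    ∃ b : OrthonormalBasis (Fin 3) ℂ E, b 0 = x ∧ b 1 = y := by
  have hyx : inner ℂ y x = 0 := inner_eq_zero_symm.mp hxy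
  have ho : Orthonormal ℂ (({0, 1} : Set (Fin 3)).domRestrict ![x, y, 0]) := by
    constructor
    · rintro ⟨i, rfl | rfl⟩ 
      · exact hx
      · exact hy
    · rintro ⟨i, rfl | rfl⟩ ⟨j, rfl | rfl⟩ hij
      · exact absurd rfl hij
      · exact hxy
      · exact hyx
      · exact absurd rfl hij
  obtain ⟨b, hb⟩ := ho.exists_orthonormalBasis_extension_of_card_eq (by simp)
  exact ⟨b, by simpa using hb 0 (by simp), by simpa using hb 1 (by simp)⟩

theorem S_perm2 (t : T3) (u v w : E) : S (fun j i k => t i j k) v u w = S t u v w := by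
  simp only [S, Fin.sum_univ_three]
  ring

theorem S_perm3 (t : T3) (u v w : E) : S (fun k i j => t i j k) w u v = S t u v w := by
  simp only [S, Fin.sum_univ_three]
  ring

set_option maxHeartbeats 1000000 in
theorem core (t : T3) (hn : ∑ i, ∑ j, ∑ k, ‖t i j k‖ ^ 2 = 1) (la lb lc : Fin 3 → ℝ)
    (ha : IsOrderedSpectrum (rho1 t) la)
    (hb : IsOrderedSpectrum (rho1 (fun j i k => t i j k)) lb)
    (hc : IsOrderedSpectrum (rho1 (fun k i j => t i j k)) lc) :
    2 * la 1 + la 2 ≤ 2 * lb 0 + lb 1 + 2 * lc 2 + lc 1 := by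
  obtain ⟨e, he, -, he1⟩ := spec_q _ _ ha
  obtain ⟨v, hv, -, -⟩ := spec_q _ _ hb
  obtain ⟨g, hg, hg1, -⟩ := spec_q _ _ hc
  have sa := q_sum t e
  have sb := q_sum (fun j i k => t i j k) v
  have sc := q_sum (fun k i j => t i j k) g
  simp only [he] at sa
  simp only [hv] at sb
  simp only [hg] at sc
  have nb : ∑ j, ∑ i, ∑ k, ‖t i j k‖ ^ 2 = 1 := by rw [Finset.sum_comm]; exact hn
  have nc : ∑ k, ∑ i, ∑ j, ‖t i j k‖ ^ 2 = 1 := by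
    rw [Finset.sum_comm, ← hn]
    exact Finset.sum_congr rfl fun i _ => Finset.sum_comm
  -- the choice of bases
  let Y : E → E → E := fun v w => WithLp.toLp 2 fun i =>
    ∑ j, ∑ k, (starRingEnd ℂ) (v j) * (starRingEnd ℂ) (w k) * t i j k
  let Z : E → E → E := fun u v => WithLp.toLp 2 fun k =>
    ∑ i, ∑ j, (starRingEnd ℂ) (u i) * (starRingEnd ℂ) (v j) * t i j k
  have hY : ∀ u v w, S t u v w = inner ℂ u (Y v w) := by
    intro u v w
    simp only [S, inner_eq, Y, Fin.sum_univ_three]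
    ring
  have hZ : ∀ u v w, S t u v w = inner ℂ w (Z u v) := by
    intro u v w
    simp only [S, inner_eq, Z, Fin.sum_univ_three]
    ring
  obtain ⟨w0, hw0, hwa, hwb⟩ := exists_orth (Z (e 1) (v 2)) (Z (e 2) (v 2))
  have hwa' : S t (e 1) (v 2) w0 = 0 := by rw [hZ]; exact inner_eq_zero_symm.mp hwa
  have hwb' : S t (e 2) (v 2) w0 = 0 := by rw [hZ]; exact inner_eq_zero_symm.mp hwb
  have key : ∀ u : E, inner ℂ u (e 0) = 0 → S t u (v 2) w0 = 0 := by
    intro u hu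
    rw [hY] at hwa' hwb' ⊢
    rw [← e.sum_inner_mul_inner]
    simp [Fin.sum_univ_three, hu, hwa', hwb']
  obtain ⟨f, hf, hfa, hfb⟩ := exists_orth (e 0) (Y (v 1) w0)
  have hfb' : S t f (v 1) w0 = 0 := by rw [hY]; exact inner_eq_zero_symm.mp hfb
  obtain ⟨w1, hw1, hwc, hwd⟩ := exists_orth w0 (Z f (v 2))
  have hwd' : S t f (v 2) w1 = 0 := by rw [hZ]; exact inner_eq_zero_symm.mp hwd
  obtain ⟨u, hu0, hu1⟩ := exists_basis (e 0) f (e.orthonormal.1 0) hf hfa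
  obtain ⟨w, hww0, hww1⟩ := exists_basis w0 w1 hw0 hw1 hwc
  have z120 : S t (u 1) (v 2) (w 0) = 0 := by
    rw [hww0]; apply key; rw [← hu0, u.inner_eq_ite]; simp
  have z220 : S t (u 2) (v 2) (w 0) = 0 := by
    rw [hww0]; apply key; rw [← hu0, u.inner_eq_ite]; simp
  have z121 : S t (u 1) (v 2) (w 1) = 0 := by rw [hww1, hu1]; exact hwd'
  have z110 : S t (u 1) (v 1) (w 0) = 0 := by rw [hww0, hu1]; exact hfb'
  have p1 : ∀ i, q t (u i) = ∑ j, ∑ k, ‖S t (u i) (v j) (w k)‖ ^ 2 := fun i => q_eq t _ v w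
  have p2 : ∀ j, q (fun j i k => t i j k) (v j) = ∑ i, ∑ k, ‖S t (u i) (v j) (w k)‖ ^ 2 := by
    intro j
    rw [q_eq _ _ u w]
    refine Finset.sum_congr rfl fun i _ => Finset.sum_congr rfl fun k _ => ?_
    rw [S_perm2]
  have p3 : ∀ k, q (fun k i j => t i j k) (w k) = ∑ i, ∑ j, ‖S t (u i) (v j) (w k)‖ ^ 2 := by
    intro k
    rw [q_eq _ _ u v]
    refine Finset.sum_congr rfl fun i _ => Finset.sum_congr rfl fun j _ => ?_
    rw [S_perm3]
  have tot := q_sum t u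
  rw [hn] at tot sa
  have sb' := sb.trans nb
  have sc' := sc.trans nc
  have a0 : q t (u 0) = la 0 := by rw [hu0, he]
  have a1 : la 1 ≤ q t (u 1) := by rw [hu1]; exact he1 f hf hfa
  have b0 := hv 0
  have b2 := hv 2
  have c0 := (hg1 (w 0) (w.orthonormal.1 0)).1
  have c2 := (hg1 (w 2) (w.orthonormal.1 2)).2
  rw [p2] at b0 b2
  rw [p3] at c0 c2
  simp only [p1] at a0 a1 tot
  have pos : ∀ i j k, 0 ≤ ‖S t (u i) (v j) (w k)‖ ^ 2 := fun i j k => sq_nonneg _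
  generalize hx : (fun i j k => ‖S t (u i) (v j) (w k)‖ ^ 2) = x at *
  have hx' : ∀ i j k, ‖S t (u i) (v j) (w k)‖ ^ 2 = x i j k := fun i j k => by rw [← hx]
  have y120 : x 1 2 0 = 0 := by rw [← hx', z120]; simp
  have y220 : x 2 2 0 = 0 := by rw [← hx', z220]; simp
  have y121 : x 1 2 1 = 0 := by rw [← hx', z121]; simp
  have y110 : x 1 1 0 = 0 := by rw [← hx', z110]; simp
  simp only [hx'] at *
  simp only [Fin.sum_univ_three] at *
  have P0 := pos 0
  have P1 := pos 1
  have P2 := pos 2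
  linarith [P0 0 0, P0 0 1, P0 0 2, P0 1 0, P0 1 1, P0 1 2, P0 2 0, P0 2 1, P0 2 2,
    P1 0 0, P1 0 1, P1 0 2, P1 1 0, P1 1 1, P1 1 2, P1 2 0, P1 2 1, P1 2 2,
    P2 0 0, P2 0 1, P2 0 2, P2 1 0, P2 1 1, P2 1 2, P2 2 0, P2 2 1, P2 2 2]

theorem rho1_swap (t : T3) : rho1 (fun i k j => t i j k) = rho1 t := by
  ext i i'
  simp only [rho1, Matrix.of_apply]
  exact Finset.sum_comm

end Qutrit

theorem three_qutrit_ineq7 (c : Fin 3 → Fin 3 → Fin 3 → ℂ)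
    (hnorm : ∑ i : Fin 3, ∑ j : Fin 3, ∑ k : Fin 3, ‖c i j k‖ ^ 2 = 1)
    (l : Fin 3 → Fin 3 → ℝ)
    (h1 : IsOrderedSpectrum (rho1 c) (l 0))
    (h2 : IsOrderedSpectrum (rho2 c) (l 1))
    (h3 : IsOrderedSpectrum (rho3 c) (l 2)) :
    ∀ a b c' : Fin 3, a ≠ b → a ≠ c' → b ≠ c' →
      2 * l a 1 + l a 2 ≤ 2 * l b 0 + l b 1 + 2 * l c' 2 + l c' 1 := by
  have r1 : IsOrderedSpectrum (rho1 (fun i k j => c i j k)) (l 0) := by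
    rw [Qutrit.rho1_swap]; exact h1
  have r2 : IsOrderedSpectrum (rho1 (fun j k i => c i j k)) (l 1) := by
    rw [Qutrit.rho1_swap (fun j i k => c i j k)]; exact h2
  have r3 : IsOrderedSpectrum (rho1 (fun k j i => c i j k)) (l 2) := by
    rw [Qutrit.rho1_swap (fun k i j => c i j k)]; exact h3
  have s2 : IsOrderedSpectrum (rho1 (fun j i k => c i j k)) (l 1) := h2
  have s3 : IsOrderedSpectrum (rho1 (fun k i j => c i j k)) (l 2) := h3
  have n : ∀ x : Fin 3 → Fin 3 → Fin 3 → ℝ, (∑ i, ∑ j, ∑ k, x i j k = ∑ i, ∑ k, ∑ j, x i j k) ∧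
      (∑ i, ∑ j, ∑ k, x i j k = ∑ j, ∑ i, ∑ k, x i j k) := fun x =>
    ⟨Finset.sum_congr rfl fun i _ => Finset.sum_comm, Finset.sum_comm⟩
  have n132 : ∑ i, ∑ k, ∑ j, ‖c i j k‖ ^ 2 = 1 := (n fun i j k => ‖c i j k‖ ^ 2).1 ▸ hnorm
  have n213 : ∑ j, ∑ i, ∑ k, ‖c i j k‖ ^ 2 = 1 := (n fun i j k => ‖c i j k‖ ^ 2).2 ▸ hnorm
  have n231 : ∑ j, ∑ k, ∑ i, ‖c i j k‖ ^ 2 = 1 := (n fun j i k => ‖c i j k‖ ^ 2).1 ▸ n213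
  have n312 : ∑ k, ∑ i, ∑ j, ‖c i j k‖ ^ 2 = 1 := (n fun i k j => ‖c i j k‖ ^ 2).2 ▸ n132
  have n321 : ∑ k, ∑ j, ∑ i, ‖c i j k‖ ^ 2 = 1 := (n fun k i j => ‖c i j k‖ ^ 2).1 ▸ n312
  intro a b d hab had hbd
  fin_cases a <;> fin_cases b <;> fin_cases d <;>
    first
    | exact absurd rfl hab
    | exact absurd rfl had
    | exact absurd rfl hbd
    | skip
  · exact Qutrit.core c hnorm _ _ _ h1 s2 s3
  · exact Qutrit.core (fun i k j => c i j k) n132 _ _ _ r1 s3 s2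
  · exact Qutrit.core (fun j i k => c i j k) n213 _ _ _ s2 h1 r3
  · exact Qutrit.core (fun j k i => c i j k) n231 _ _ _ r2 r3 h1
  · exact Qutrit.core (fun k i j => c i j k) n312 _ _ _ s3 r1 r2
  · exact Qutrit.core (fun k j i => c i j k) n321 _ _ _ r3 r2 r1
end

section
/- The convex polytope S ⊂ ℝ⁹ of points (λ_i^{(a)})_{i,a∈{1,2,3}} satisfying, for each a, 0 ≤ λ_1^{(a)} ≤ λ_2^{(a)} ≤ λ_3^{(a)} and λ_1^{(a)}+λ_2^{(a)}+λ_3^{(a)} = 1, together with, for every permutation (a,b,c) of (1,2,3), the seven inequalities (1) λ_2^{(a)}+λ_1^{(a)} ≤ λ_2^{(b)}+λ_1^{(b)}+λ_2^{(c)}+λ_1^{(c)}, (2) λ_3^{(a)}+λ_1^{(a)} ≤ λ_2^{(b)}+λ_1^{(b)}+λ_3^{(c)}+λ_1^{(c)}, (3) λ_2^{(a)}+λ_3^{(a)} ≤ λ_2^{(b)}+λ_1^{(b)}+λ_2^{(c)}+λ_3^{(c)}, (4) 2λ_2^{(a)}+λ_1^{(a)} ≤ 2λ_2^{(b)}+λ_1^{(b)}+2λ_2^{(c)}+λ_1^{(c)},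 (5) 2λ_1^{(a)}+λ_2^{(a)} ≤ 2λ_2^{(b)}+λ_1^{(b)}+2λ_1^{(c)}+λ_2^{(c)}, (6) 2λ_2^{(a)}+λ_3^{(a)} ≤ 2λ_2^{(b)}+λ_1^{(b)}+2λ_2^{(c)}+λ_3^{(c)}, (7) 2λ_2^{(a)}+λ_3^{(a)} ≤ 2λ_1^{(b)}+λ_2^{(b)}+2λ_3^{(c)}+λ_2^{(c)}, is the convex hull of the set of all qutrit permutations (simultaneous permutation of the index a over the three triples) of the following eleven points, written as ordered triples of eigenvalue-triples with O = (0,0,1), A = (0,1/2,1/2), B = (1/3,1/3,1/3): [O,O,O], [O,A,A], [O,B,B], [A,A,A], [A,A,B], [A,B,B], [B,B,B], [B,(0,1/3,2/3),(0,1/3,2/3)], [A,(0,1/4,3/4),(1/4,1/4,1/2)], [A,B,(1/6,1/6,2/3)], [A,(1/6,1/6,2/3),(1/6,1/6,2/3)]. -/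
/-- The eigenvalue triple `O = (0, 0, 1)`. -/
noncomputable def Opt : Fin 3 → ℝ := ![0, 0, 1]

/-- The eigenvalue triple `A = (0, 1/2, 1/2)`. -/
noncomputable def Apt : Fin 3 → ℝ := ![0, 1/2, 1/2]

/-- The eigenvalue triple `B = (1/3, 1/3, 1/3)`. -/
noncomputable def Bpt : Fin 3 → ℝ := ![1/3, 1/3, 1/3]

/-- The eleven corner points of Theorem 2 (before applying qutrit permutations). -/
noncomputable def cornerPts : Set (Fin 3 → Fin 3 → ℝ) :=
  { ![Opt, Opt, Opt], ![Opt, Apt, Apt], ![Opt, Bpt, Bpt], ![Apt, Apt, Apt],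
    ![Apt, Apt, Bpt], ![Apt, Bpt, Bpt], ![Bpt, Bpt, Bpt],
    ![Bpt, ![0, 1/3, 2/3], ![0, 1/3, 2/3]],
    ![Apt, ![0, 1/4, 3/4], ![1/4, 1/4, 1/2]],
    ![Apt, Bpt, ![1/6, 1/6, 2/3]],
    ![Apt, ![1/6, 1/6, 2/3], ![1/6, 1/6, 2/3]] }

/-!
# The qutrit polytope as a convex hull

The harder inclusion is proved by a pulling triangulation.  We homogenise: `cornerCone` is the cone
over the convex hull.  If `v` is a vertex of a face, any point of the face is a nonnegative multiple
of `v` plus a point of a facet of the face not containing `v` (lemma `pull`).  Pulling successively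
at `[A,A,A]`, `[B,A,A]`, `[A,B,B]`, `[O,O,O]`, all the facets that remain are simplices, on which the
barycentric coordinates are multiples of the slacks of the defining inequalities (`cone_mem`).
-/

/-- The set of corner points and their qutrit permutations. -/
def cornerSet : Set (Fin 3 → Fin 3 → ℝ) :=
  {p : Fin 3 → Fin 3 → ℝ | ∃ σ : Equiv.Perm (Fin 3), ∃ q ∈ cornerPts, p = fun a => q (σ a)}

/-- The cone over the convex hull of the corner points. -/
def cornerCone : Set (Fin 3 → Fin 3 → ℝ) :=
  {x | ∃ t : ℝ, 0 ≤ t ∧ ∃ k ∈ convexHull ℝ cornerSet, x = t • k}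

theorem cornerSet_subset_cone : convexHull ℝ cornerSet ⊆ cornerCone :=
  fun x hx => ⟨1, zero_le_one, x, hx, (one_smul ℝ x).symm⟩

theorem cornerCone_smul {c : ℝ} (hc : 0 ≤ c) {x : Fin 3 → Fin 3 → ℝ} (hx : x ∈ cornerCone) :
    c • x ∈ cornerCone := by
  obtain ⟨t, ht, k, hk, rfl⟩ := hx
  exact ⟨c * t, mul_nonneg hc ht, k, hk, by rw [mul_smul]⟩

theorem cornerCone_add {x y : Fin 3 → Fin 3 → ℝ} (hx : x ∈ cornerCone) (hy : y ∈ cornerCone) :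
    x + y ∈ cornerCone := by
  obtain ⟨t, ht, k, hk, rfl⟩ := hx
  obtain ⟨u, hu, m, hm, rfl⟩ := hy
  rcases (add_nonneg ht hu).eq_or_lt with h0 | hpos
  · have h1 : t = 0 := by linarith
    have h2 : u = 0 := by linarith
    exact ⟨0, le_rfl, k, hk, by simp [h1, h2]⟩
  · refine ⟨t + u, hpos.le, (t / (t + u)) • k + (u / (t + u)) • m,
      convex_convexHull ℝ _ hk hm (by positivity) (by positivity) (by field_simp), ?_⟩
    rw [smul_add, smul_smul, smul_smul, mul_div_cancel₀ _ hpos.ne', mul_div_cancel₀ _ hpos.ne']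

theorem cornerSet_perm (σ : Equiv.Perm (Fin 3)) {x : Fin 3 → Fin 3 → ℝ} (hx : x ∈ cornerSet) :
    (fun a => x (σ a)) ∈ cornerSet := by
  obtain ⟨τ, q, hq, rfl⟩ := hx
  exact ⟨σ.trans τ, q, hq, rfl⟩

theorem cornerCone_perm (σ : Equiv.Perm (Fin 3)) {x : Fin 3 → Fin 3 → ℝ} (hx : x ∈ cornerCone) :
    (fun a => x (σ a)) ∈ cornerCone := by
  obtain ⟨t, ht, k, hk, rfl⟩ := hx
  refine ⟨t, ht, fun a => k (σ a), ?_, rfl⟩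
  let f : (Fin 3 → Fin 3 → ℝ) →ₗ[ℝ] (Fin 3 → Fin 3 → ℝ) := LinearMap.funLeft ℝ (Fin 3 → ℝ) σ
  have h1 : f k ∈ f '' convexHull ℝ cornerSet := ⟨k, hk, rfl⟩
  rw [f.image_convexHull] at h1
  refine convexHull_mono ?_ h1
  rintro _ ⟨y, hy, rfl⟩
  exact cornerSet_perm σ hy

/-- The six orderings of the qutrits: first, second and third entry. -/
def fstQ : Fin 6 → Fin 3 := ![0, 0, 1, 1, 2, 2]
def sndQ : Fin 6 → Fin 3 := ![1, 2, 0, 2, 0, 1]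
def trdQ : Fin 6 → Fin 3 := ![2, 1, 2, 0, 1, 0]

/-- The orderings as functions of the position. -/
def permQ (g : Fin 6) : Fin 3 → Fin 3 := ![fstQ g, sndQ g, trdQ g]

theorem permQ_bij : ∀ g, Function.Bijective (permQ g) := by decide

theorem permQ_comp : ∀ g g' : Fin 6, ∃ m : Fin 6, permQ g (fstQ g') = fstQ m ∧
    permQ g (sndQ g') = sndQ m ∧ permQ g (trdQ g') = trdQ m := by decide

theorem permQ_surj : ∀ a b c : Fin 3, a ≠ b → a ≠ c → b ≠ c →
    ∃ g, fstQ g = a ∧ sndQ g = b ∧ trdQ g = c := by decide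

theorem permQ_ne : ∀ g, fstQ g ≠ sndQ g ∧ fstQ g ≠ trdQ g ∧ sndQ g ≠ trdQ g := by decide

theorem mem_of_permQ (g : Fin 6) {x : Fin 3 → Fin 3 → ℝ}
    (hx : (fun a => x (permQ g a)) ∈ cornerCone) : x ∈ cornerCone := by
  have := cornerCone_perm (Equiv.ofBijective _ (permQ_bij g)).symm hx
  convert this using 2 with a
  exact congrArg x ((Equiv.ofBijective _ (permQ_bij g)).apply_symm_apply a).symm

theorem vertex_mem {q : Fin 3 → Fin 3 → ℝ} (g : Fin 6) (hq : q ∈ cornerPts) :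
    ![q (fstQ g), q (sndQ g), q (trdQ g)] ∈ cornerCone := by
  refine cornerSet_subset_cone (subset_convexHull ℝ _ ?_)
  refine ⟨Equiv.ofBijective _ (permQ_bij g), q, hq, ?_⟩
  funext a
  fin_cases a <;> rfl

/-- The ten types of inequalities, in terms of three eigenvalue triples. -/
def form : Fin 10 → (Fin 3 → ℝ) → (Fin 3 → ℝ) → (Fin 3 → ℝ) → ℝ :=
  ![fun u _ _ => u 0, fun u _ _ => u 1 - u 0, fun u _ _ => u 2 - u 1,
    fun u v w => v 1 + v 0 + w 1 + w 0 - (u 1 + u 0),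
    fun u v w => v 1 + v 0 + w 2 + w 0 - (u 2 + u 0),
    fun u v w => v 1 + v 0 + w 1 + w 2 - (u 1 + u 2),
    fun u v w => 2 * v 1 + v 0 + 2 * w 1 + w 0 - (2 * u 1 + u 0),
    fun u v w => 2 * v 1 + v 0 + 2 * w 0 + w 1 - (2 * u 0 + u 1),
    fun u v w => 2 * v 1 + v 0 + 2 * w 1 + w 2 - (2 * u 1 + u 2),
    fun u v w => 2 * v 0 + v 1 + 2 * w 2 + w 1 - (2 * u 1 + u 2)]

@[simp] theorem form_eval (u v w : Fin 3 → ℝ) :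
    form 0 u v w = u 0 ∧
    form 1 u v w = u 1 - u 0 ∧
    form 2 u v w = u 2 - u 1 ∧
    form 3 u v w = v 1 + v 0 + w 1 + w 0 - (u 1 + u 0) ∧
    form 4 u v w = v 1 + v 0 + w 2 + w 0 - (u 2 + u 0) ∧
    form 5 u v w = v 1 + v 0 + w 1 + w 2 - (u 1 + u 2) ∧
    form 6 u v w = 2 * v 1 + v 0 + 2 * w 1 + w 0 - (2 * u 1 + u 0) ∧
    form 7 u v w = 2 * v 1 + v 0 + 2 * w 0 + w 1 - (2 * u 0 + u 1) ∧
    form 8 u v w = 2 * v 1 + v 0 + 2 * w 1 + w 2 - (2 * u 1 + u 2) ∧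
    form 9 u v w = 2 * v 0 + v 1 + 2 * w 2 + w 1 - (2 * u 1 + u 2) :=
  ⟨rfl, rfl, rfl, rfl, rfl, rfl, rfl, rfl, rfl, rfl⟩

@[simp] theorem fstQ_eval : fstQ 0 = 0 ∧ fstQ 1 = 0 ∧ fstQ 2 = 1 ∧ fstQ 3 = 1 ∧ fstQ 4 = 2 ∧ fstQ 5 = 2 := by decide

@[simp] theorem sndQ_eval : sndQ 0 = 1 ∧ sndQ 1 = 2 ∧ sndQ 2 = 0 ∧ sndQ 3 = 2 ∧ sndQ 4 = 0 ∧ sndQ 5 = 1 := by decide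

@[simp] theorem trdQ_eval : trdQ 0 = 2 ∧ trdQ 1 = 1 ∧ trdQ 2 = 2 ∧ trdQ 3 = 0 ∧ trdQ 4 = 1 ∧ trdQ 5 = 0 := by decide

@[simp] theorem permQ_eval (g : Fin 6) :
    permQ g 0 = fstQ g ∧ permQ g 1 = sndQ g ∧ permQ g 2 = trdQ g := ⟨rfl, rfl, rfl⟩

@[simp] theorem triple_eval {α : Type*} (x y z : α) :
    ![x, y, z] 0 = x ∧ ![x, y, z] 1 = y ∧ ![x, y, z] 2 = z := ⟨rfl, rfl, rfl⟩

/-- The slack of the inequality of type `i.1` for the ordering `i.2` of the qutrits. -/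
def slack (i : Fin 10 × Fin 6) (l : Fin 3 → Fin 3 → ℝ) : ℝ :=
  form i.1 (l (fstQ i.2)) (l (sndQ i.2)) (l (trdQ i.2))

theorem form_comb (k : Fin 10) (u v w u' v' w' : Fin 3 → ℝ) (s t : ℝ) :
    form k (s • u + t • u') (s • v + t • v') (s • w + t • w') =
      s * form k u v w + t * form k u' v' w' := by
  fin_cases k <;> simp <;> ring

theorem slack_comb (i : Fin 10 × Fin 6) (l m : Fin 3 → Fin 3 → ℝ) (s t : ℝ) :
    slack i (s • l + t • m) = s * slack i l + t * slack i m :=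
  form_comb i.1 _ _ _ _ _ _ s t

theorem slack_sub (i : Fin 10 × Fin 6) (l v : Fin 3 → Fin 3 → ℝ) (t : ℝ) :
    slack i (l - t • v) = slack i l - t * slack i v := by
  have := slack_comb i l v 1 (-t)
  rw [one_smul, neg_smul, ← sub_eq_add_neg] at this
  rw [this]; ring

/-- All three triples have the same sum. -/
def EqualSums (l : Fin 3 → Fin 3 → ℝ) : Prop :=
  l 0 0 + l 0 1 + l 0 2 = l 1 0 + l 1 1 + l 1 2 ∧ l 1 0 + l 1 1 + l 1 2 = l 2 0 + l 2 1 + l 2 2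

theorem EqualSums.sub_smul {l v : Fin 3 → Fin 3 → ℝ} (hl : EqualSums l) (hv : EqualSums v) (t : ℝ) :
    EqualSums (l - t • v) := by
  obtain ⟨h1, h2⟩ := hl
  obtain ⟨h3, h4⟩ := hv
  simp only [EqualSums, Pi.sub_apply, Pi.smul_apply, smul_eq_mul]
  exact ⟨by linear_combination h1 - t * h3, by linear_combination h2 - t * h4⟩

theorem EqualSums.perm {l : Fin 3 → Fin 3 → ℝ} (hl : EqualSums l) (g : Fin 6) :
    EqualSums (fun a => l (permQ g a)) := by
  obtain ⟨h1, h2⟩ := hl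
  fin_cases g <;> constructor <;> simp <;> linarith

/-- Subtracting the largest possible multiple of `v` makes one of the inequalities tight. -/
theorem pull (L : List (Fin 10 × Fin 6)) (l : Fin 3 → Fin 3 → ℝ) (v : cornerCone)
    (hl : ∀ i ∈ L, 0 ≤ slack i l) (hv : ∀ i ∈ L, 0 ≤ slack i v) (hp : ∃ i ∈ L, 0 < slack i v)
    (hrec : ∀ (t : ℝ) (w : Fin 3 → Fin 3 → ℝ), w = l - t • v.1 → (∀ i ∈ L, 0 ≤ slack i w) →
      ∀ i ∈ L, 0 < slack i v → slack i w = 0 → w ∈ cornerCone) : l ∈ cornerCone := by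
  classical
  obtain ⟨j, hj, hjpos⟩ := hp
  obtain ⟨i, hi, hmin⟩ := Finset.exists_min_image
    (L.toFinset.filter fun i => 0 < slack i v) (fun i => slack i l / slack i v)
    ⟨j, by simp [hj, hjpos]⟩
  simp only [Finset.mem_filter, List.mem_toFinset] at hi hmin
  obtain ⟨hiL, hipos⟩ := hi
  set t := slack i l / slack i v with ht
  have ht0 : 0 ≤ t := div_nonneg (hl i hiL) hipos.le
  have hw : l - t • v.1 ∈ cornerCone := by
    refine hrec t _ rfl ?_ i hiL hipos ?_
    · intro k hk
      rw [slack_sub]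
      rcases (hv k hk).eq_or_lt with h0 | hpos
      · rw [← h0]; simpa using hl k hk
      · have := hmin k ⟨hk, hpos⟩
        rw [le_div_iff₀ hpos] at this
        linarith
    · rw [slack_sub, ht, div_mul_cancel₀ _ hipos.ne', sub_self]
  have := cornerCone_add hw (cornerCone_smul ht0 v.2)
  rwa [sub_add_cancel] at this

/-- Nonnegative combinations of vertices, with weights proportional to slacks. -/
theorem cone_mem {n : ℕ} {L : List (Fin 10 × Fin 6)} (l : Fin 3 → Fin 3 → ℝ)
    (h : ∀ i ∈ L, 0 ≤ slack i l) (J : Fin (n + 1) → Fin 10 × Fin 6) (r : Fin (n + 1) → ℝ)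
    (V : Fin (n + 1) → cornerCone) (hJ : ∀ j, J j ∈ L) (hr : ∀ j, 0 ≤ r j)
    (he : ∀ a b, l a b = ∑ j, r j * slack (J j) l * (V j).1 a b) : l ∈ cornerCone := by
  have key : ∀ (m : ℕ) (f : Fin (m + 1) → Fin 3 → Fin 3 → ℝ), (∀ j, f j ∈ cornerCone) →
      ∑ j, f j ∈ cornerCone := by
    intro m
    induction m with
    | zero => intro f hf; simpa using hf 0
    | succ m ih =>
      intro f hf
      rw [Fin.sum_univ_succ]
      exact cornerCone_add (hf 0) (ih _ fun j => hf j.succ)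
  have hl : l = ∑ j, (r j * slack (J j) l) • (V j).1 := by
    funext a b
    rw [he a b]
    simp [Finset.sum_apply]
  rw [hl]
  exact key n _ fun j => cornerCone_smul (mul_nonneg (hr j) (h _ (hJ j))) (V j).2

/-- The auxiliary eigenvalue triples. -/
noncomputable def cpt : Fin 3 → ℝ := ![0, 1/3, 2/3]
noncomputable def dpt : Fin 3 → ℝ := ![0, 1/4, 3/4]
noncomputable def ept : Fin 3 → ℝ := ![1/4, 1/4, 1/2]
noncomputable def spt : Fin 3 → ℝ := ![1/6, 1/6, 2/3]

@[simp] noncomputable def vOOO : cornerCone :=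
  ⟨![Opt, Opt, Opt], vertex_mem (q := ![Opt, Opt, Opt]) 0 (by simp [cornerPts, cpt, dpt, ept, spt])⟩

@[simp] noncomputable def vOAA : cornerCone :=
  ⟨![Opt, Apt, Apt], vertex_mem (q := ![Opt, Apt, Apt]) 0 (by simp [cornerPts, cpt, dpt, ept, spt])⟩

@[simp] noncomputable def vAOA : cornerCone :=
  ⟨![Apt, Opt, Apt], vertex_mem (q := ![Opt, Apt, Apt]) 2 (by simp [cornerPts, cpt, dpt, ept, spt])⟩

@[simp] noncomputable def vAAO : cornerCone :=
  ⟨![Apt, Apt, Opt], vertex_mem (q := ![Opt, Apt, Apt]) 3 (by simp [cornerPts, cpt, dpt, ept, spt])⟩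

@[simp] noncomputable def vOBB : cornerCone :=
  ⟨![Opt, Bpt, Bpt], vertex_mem (q := ![Opt, Bpt, Bpt]) 0 (by simp [cornerPts, cpt, dpt, ept, spt])⟩

@[simp] noncomputable def vBOB : cornerCone :=
  ⟨![Bpt, Opt, Bpt], vertex_mem (q := ![Opt, Bpt, Bpt]) 2 (by simp [cornerPts, cpt, dpt, ept, spt])⟩

@[simp] noncomputable def vBBO : cornerCone :=
  ⟨![Bpt, Bpt, Opt], vertex_mem (q := ![Opt, Bpt, Bpt]) 3 (by simp [cornerPts, cpt, dpt, ept, spt])⟩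

@[simp] noncomputable def vAAA : cornerCone :=
  ⟨![Apt, Apt, Apt], vertex_mem (q := ![Apt, Apt, Apt]) 0 (by simp [cornerPts, cpt, dpt, ept, spt])⟩

@[simp] noncomputable def vAAB : cornerCone :=
  ⟨![Apt, Apt, Bpt], vertex_mem (q := ![Apt, Apt, Bpt]) 0 (by simp [cornerPts, cpt, dpt, ept, spt])⟩

@[simp] noncomputable def vBAA : cornerCone :=
  ⟨![Bpt, Apt, Apt], vertex_mem (q := ![Apt, Apt, Bpt]) 4 (by simp [cornerPts, cpt, dpt, ept, spt])⟩

@[simp] noncomputable def vABB : cornerCone :=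
  ⟨![Apt, Bpt, Bpt], vertex_mem (q := ![Apt, Bpt, Bpt]) 0 (by simp [cornerPts, cpt, dpt, ept, spt])⟩

@[simp] noncomputable def vBBB : cornerCone :=
  ⟨![Bpt, Bpt, Bpt], vertex_mem (q := ![Bpt, Bpt, Bpt]) 0 (by simp [cornerPts, cpt, dpt, ept, spt])⟩

@[simp] noncomputable def vBcc : cornerCone :=
  ⟨![Bpt, cpt, cpt], vertex_mem (q := ![Bpt, cpt, cpt]) 0 (by simp [cornerPts, cpt, dpt, ept, spt])⟩

@[simp] noncomputable def vccB : cornerCone :=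
  ⟨![cpt, cpt, Bpt], vertex_mem (q := ![Bpt, cpt, cpt]) 3 (by simp [cornerPts, cpt, dpt, ept, spt])⟩

@[simp] noncomputable def vAde : cornerCone :=
  ⟨![Apt, dpt, ept], vertex_mem (q := ![Apt, dpt, ept]) 0 (by simp [cornerPts, cpt, dpt, ept, spt])⟩

@[simp] noncomputable def veAd : cornerCone :=
  ⟨![ept, Apt, dpt], vertex_mem (q := ![Apt, dpt, ept]) 4 (by simp [cornerPts, cpt, dpt, ept, spt])⟩

@[simp] noncomputable def vedA : cornerCone :=
  ⟨![ept, dpt, Apt], vertex_mem (q := ![Apt, dpt, ept]) 5 (by simp [cornerPts, cpt, dpt, ept, spt])⟩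

@[simp] noncomputable def vABs : cornerCone :=
  ⟨![Apt, Bpt, spt], vertex_mem (q := ![Apt, Bpt, spt]) 0 (by simp [cornerPts, cpt, dpt, ept, spt])⟩

@[simp] noncomputable def vAsB : cornerCone :=
  ⟨![Apt, spt, Bpt], vertex_mem (q := ![Apt, Bpt, spt]) 1 (by simp [cornerPts, cpt, dpt, ept, spt])⟩

@[simp] noncomputable def vBAs : cornerCone :=
  ⟨![Bpt, Apt, spt], vertex_mem (q := ![Apt, Bpt, spt]) 2 (by simp [cornerPts, cpt, dpt, ept, spt])⟩

@[simp] noncomputable def vBsA : cornerCone :=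
  ⟨![Bpt, spt, Apt], vertex_mem (q := ![Apt, Bpt, spt]) 3 (by simp [cornerPts, cpt, dpt, ept, spt])⟩

@[simp] noncomputable def vsAB : cornerCone :=
  ⟨![spt, Apt, Bpt], vertex_mem (q := ![Apt, Bpt, spt]) 4 (by simp [cornerPts, cpt, dpt, ept, spt])⟩

@[simp] noncomputable def vsBA : cornerCone :=
  ⟨![spt, Bpt, Apt], vertex_mem (q := ![Apt, Bpt, spt]) 5 (by simp [cornerPts, cpt, dpt, ept, spt])⟩

@[simp] noncomputable def vAss : cornerCone :=
  ⟨![Apt, spt, spt], vertex_mem (q := ![Apt, spt, spt]) 0 (by simp [cornerPts, cpt, dpt, ept, spt])⟩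

@[simp] noncomputable def vsAs : cornerCone :=
  ⟨![spt, Apt, spt], vertex_mem (q := ![Apt, spt, spt]) 2 (by simp [cornerPts, cpt, dpt, ept, spt])⟩

@[simp] noncomputable def vssA : cornerCone :=
  ⟨![spt, spt, Apt], vertex_mem (q := ![Apt, spt, spt]) 3 (by simp [cornerPts, cpt, dpt, ept, spt])⟩

/-- The inequalities cutting out the face treated in `G5_mem`. -/
def G5_list : List (Fin 10 × Fin 6) :=
  [(2, 0), (2, 2), (2, 4), (3, 2), (3, 4), (3, 0)]

set_option maxHeartbeats 4000000 in
theorem G5_mem (l : Fin 3 → Fin 3 → ℝ) (hb : EqualSums l)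
    (e0 : l 0 0 = l 0 1)    (e1 : l 1 0 = l 1 1)    (e2 : l 2 0 = l 2 1)
    (h : ∀ i ∈ G5_list, 0 ≤ slack i l) : l ∈ cornerCone := by
  refine pull G5_list l vOOO h ?_ ⟨(2, 0), by simp [G5_list], ?_⟩ ?_
  · simp [slack, Opt, Apt, Bpt, G5_list, vOOO] <;> norm_num
  · simp [slack, Opt, Apt, Bpt] <;> norm_num
  intro t w hw h i hi hpos hz
  have hb : EqualSums w := hw ▸ hb.sub_smul (by simp [EqualSums, Opt, Apt, Bpt] <;> norm_num) t
  have e0 : w 0 0 = w 0 1 := by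
    rw [hw]; simp [vOOO, Opt, Apt, Bpt]; linarith
  have e1 : w 1 0 = w 1 1 := by
    rw [hw]; simp [vOOO, Opt, Apt, Bpt]; linarith
  have e2 : w 2 0 = w 2 1 := by
    rw [hw]; simp [vOOO, Opt, Apt, Bpt]; linarith
  clear hw
  obtain ⟨b0, b1⟩ := hb
  simp only [G5_list, List.mem_cons, List.not_mem_nil, or_false] at hi
  rcases hi with rfl | rfl | rfl | rfl | rfl | rfl
  · exact cone_mem w h ![(2, 2), (2, 4), (3, 0)] ![1, 1, 3/2]
      ![vBOB, vBBO, vBBB]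
      (by decide) (by norm_num [Fin.forall_fin_succ]) (by
        simp [slack] at hz
        simp [Fin.forall_fin_succ, Fin.sum_univ_succ, slack, Opt, Apt, Bpt,
          cpt, dpt, ept, spt]
        refine ⟨⟨?_, ?_, ?_⟩, ⟨?_, ?_, ?_⟩, ?_, ?_, ?_⟩ <;> linarith)
  · exact cone_mem w h ![(2, 0), (2, 4), (3, 2)] ![1, 1, 3/2]
      ![vOBB, vBBO, vBBB]
      (by decide) (by norm_num [Fin.forall_fin_succ]) (by
        simp [slack] at hz
        simp [Fin.forall_fin_succ, Fin.sum_univ_succ, slack, Opt, Apt, Bpt,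
          cpt, dpt, ept, spt]
        refine ⟨⟨?_, ?_, ?_⟩, ⟨?_, ?_, ?_⟩, ?_, ?_, ?_⟩ <;> linarith)
  · exact cone_mem w h ![(2, 0), (2, 2), (3, 4)] ![1, 1, 3/2]
      ![vOBB, vBOB, vBBB]
      (by decide) (by norm_num [Fin.forall_fin_succ]) (by
        simp [slack] at hz
        simp [Fin.forall_fin_succ, Fin.sum_univ_succ, slack, Opt, Apt, Bpt,
          cpt, dpt, ept, spt]
        refine ⟨⟨?_, ?_, ?_⟩, ⟨?_, ?_, ?_⟩, ?_, ?_, ?_⟩ <;> linarith)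
  all_goals ((simp [slack, Opt, Apt, Bpt] at hpos) <;> norm_num at hpos)

/-- The inequalities cutting out the face treated in `G9_mem`. -/
def G9_list : List (Fin 10 × Fin 6) :=
  [(1, 0), (6, 0), (8, 0), (8, 1), (7, 3), (7, 5), (0, 0), (2, 4), (2, 0), (2, 2)]

set_option maxHeartbeats 4000000 in
theorem G9_mem (l : Fin 3 → Fin 3 → ℝ) (hb : EqualSums l)
    (e0 : l 1 0 = l 1 1)    (e1 : l 2 0 = l 2 1)
    (h : ∀ i ∈ G9_list, 0 ≤ slack i l) : l ∈ cornerCone := by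
  refine pull G9_list l vABB h ?_ ⟨(1, 0), by simp [G9_list], ?_⟩ ?_
  · simp [slack, Opt, Apt, Bpt, G9_list, vABB] <;> norm_num
  · simp [slack, Opt, Apt, Bpt] <;> norm_num
  intro t w hw h i hi hpos hz
  have hb : EqualSums w := hw ▸ hb.sub_smul (by simp [EqualSums, Opt, Apt, Bpt] <;> norm_num) t
  have e0 : w 1 0 = w 1 1 := by
    rw [hw]; simp [vABB, Opt, Apt, Bpt]; linarith
  have e1 : w 2 0 = w 2 1 := by
    rw [hw]; simp [vABB, Opt, Apt, Bpt]; linarith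
  clear hw
  obtain ⟨b0, b1⟩ := hb
  simp only [G9_list, List.mem_cons, List.not_mem_nil, or_false] at hi
  rcases hi with rfl | rfl | rfl | rfl | rfl | rfl | rfl | rfl | rfl | rfl
  · refine mem_of_permQ 0 (G5_mem _ (EqualSums.perm ⟨b0, b1⟩ 0) ?_ ?_ ?_ ?_)
    all_goals simp [slack, G5_list, G9_list] at hz h ⊢
    all_goals (repeat' constructor) <;> linarith
  · exact cone_mem w h ![(2, 0), (8, 1), (8, 0), (1, 0)] ![1, 1, 1, 2]
      ![vOOO, vBOB, vBBO, vAss]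
      (by decide) (by norm_num [Fin.forall_fin_succ]) (by
        simp [slack] at hz
        simp [Fin.forall_fin_succ, Fin.sum_univ_succ, slack, Opt, Apt, Bpt,
          cpt, dpt, ept, spt]
        refine ⟨⟨?_, ?_, ?_⟩, ⟨?_, ?_, ?_⟩, ?_, ?_, ?_⟩ <;> linarith)
  · exact cone_mem w h ![(2, 0), (0, 0), (6, 0), (7, 5)] ![1, 3, 2, 2]
      ![vOOO, vBOB, vAsB, vAss]
      (by decide) (by norm_num [Fin.forall_fin_succ]) (by
        simp [slack] at hz
        simp [Fin.forall_fin_succ, Fin.sum_univ_succ, slack, Opt, Apt, Bpt,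
          cpt, dpt, ept, spt]
        refine ⟨⟨?_, ?_, ?_⟩, ⟨?_, ?_, ?_⟩, ?_, ?_, ?_⟩ <;> linarith)
  · exact cone_mem w h ![(2, 0), (0, 0), (6, 0), (7, 3)] ![1, 3, 2, 2]
      ![vOOO, vBBO, vABs, vAss]
      (by decide) (by norm_num [Fin.forall_fin_succ]) (by
        simp [slack] at hz
        simp [Fin.forall_fin_succ, Fin.sum_univ_succ, slack, Opt, Apt, Bpt,
          cpt, dpt, ept, spt]
        refine ⟨⟨?_, ?_, ?_⟩, ⟨?_, ?_, ?_⟩, ?_, ?_, ?_⟩ <;> linarith)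
  · exact cone_mem w h ![(2, 2), (8, 1), (0, 0), (1, 0)] ![1, 1, 3, 2]
      ![vOOO, vOBB, vBBO, vABs]
      (by decide) (by norm_num [Fin.forall_fin_succ]) (by
        simp [slack] at hz
        simp [Fin.forall_fin_succ, Fin.sum_univ_succ, slack, Opt, Apt, Bpt,
          cpt, dpt, ept, spt]
        refine ⟨⟨?_, ?_, ?_⟩, ⟨?_, ?_, ?_⟩, ?_, ?_, ?_⟩ <;> linarith)
  · exact cone_mem w h ![(2, 4), (8, 0), (0, 0), (1, 0)] ![1, 1, 3, 2]
      ![vOOO, vOBB, vBOB, vAsB]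
      (by decide) (by norm_num [Fin.forall_fin_succ]) (by
        simp [slack] at hz
        simp [Fin.forall_fin_succ, Fin.sum_univ_succ, slack, Opt, Apt, Bpt,
          cpt, dpt, ept, spt]
        refine ⟨⟨?_, ?_, ?_⟩, ⟨?_, ?_, ?_⟩, ?_, ?_, ?_⟩ <;> linarith)
  all_goals ((simp [slack, Opt, Apt, Bpt] at hpos) <;> norm_num at hpos)

/-- The inequalities cutting out the face treated in `G18_mem`. -/
def G18_list : List (Fin 10 × Fin 6) :=
  [(1, 2), (1, 4), (4, 0), (7, 0), (4, 1), (7, 1), (6, 2), (7, 2), (8, 2), (5, 3), (8, 3), (6, 4), (7, 4), (8, 4), (5, 5), (8, 5), (2, 4), (0, 2), (0, 4), (9, 3), (9, 5), (2, 2), (2, 0)]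

set_option maxHeartbeats 4000000 in
theorem G18_mem (l : Fin 3 → Fin 3 → ℝ) (hb : EqualSums l)
    (e0 : l 0 0 = l 0 1)
    (h : ∀ i ∈ G18_list, 0 ≤ slack i l) : l ∈ cornerCone := by
  refine pull G18_list l vBAA h ?_ ⟨(1, 2), by simp [G18_list], ?_⟩ ?_
  · simp [slack, Opt, Apt, Bpt, G18_list, vBAA] <;> norm_num
  · simp [slack, Opt, Apt, Bpt] <;> norm_num
  intro t w hw h i hi hpos hz
  have hb : EqualSums w := hw ▸ hb.sub_smul (by simp [EqualSums, Opt, Apt, Bpt] <;> norm_num) t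
  have e0 : w 0 0 = w 0 1 := by
    rw [hw]; simp [vBAA, Opt, Apt, Bpt]; linarith
  clear hw
  obtain ⟨b0, b1⟩ := hb
  simp only [G18_list, List.mem_cons, List.not_mem_nil, or_false] at hi
  rcases hi with rfl | rfl | rfl | rfl | rfl | rfl | rfl | rfl | rfl | rfl | rfl | rfl | rfl | rfl | rfl | rfl | rfl | rfl | rfl | rfl | rfl | rfl | rfl
  · refine mem_of_permQ 4 (G9_mem _ (EqualSums.perm ⟨b0, b1⟩ 4) ?_ ?_ ?_)
    all_goals simp [slack, G9_list, G18_list] at hz h ⊢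
    all_goals (repeat' constructor) <;> linarith
  · refine mem_of_permQ 2 (G9_mem _ (EqualSums.perm ⟨b0, b1⟩ 2) ?_ ?_ ?_)
    all_goals simp [slack, G9_list, G18_list] at hz h ⊢
    all_goals (repeat' constructor) <;> linarith
  · exact cone_mem w h ![(2, 4), (8, 5), (0, 4), (6, 4), (0, 2)] ![1, 2, 3, 4, 6]
      ![vOOO, vOAA, vBOB, vedA, vssA]
      (by decide) (by norm_num [Fin.forall_fin_succ]) (by
        simp [slack] at hz
        simp [Fin.forall_fin_succ, Fin.sum_univ_succ, slack, Opt, Apt, Bpt,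
          cpt, dpt, ept, spt]
        refine ⟨⟨?_, ?_, ?_⟩, ⟨?_, ?_, ?_⟩, ?_, ?_, ?_⟩ <;> linarith)
  · exact cone_mem w h ![(2, 0), (0, 4), (5, 5), (1, 2), (7, 1)] ![1, 3, 3, 3, 2]
      ![vOOO, vBOB, vBBO, vBcc, vBsA]
      (by decide) (by norm_num [Fin.forall_fin_succ]) (by
        simp [slack] at hz
        simp [Fin.forall_fin_succ, Fin.sum_univ_succ, slack, Opt, Apt, Bpt,
          cpt, dpt, ept, spt]
        refine ⟨⟨?_, ?_, ?_⟩, ⟨?_, ?_, ?_⟩, ?_, ?_, ?_⟩ <;> linarith)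
  · exact cone_mem w h ![(2, 2), (8, 3), (0, 2), (6, 2), (0, 4)] ![1, 2, 3, 4, 6]
      ![vOOO, vOAA, vBBO, veAd, vsAs]
      (by decide) (by norm_num [Fin.forall_fin_succ]) (by
        simp [slack] at hz
        simp [Fin.forall_fin_succ, Fin.sum_univ_succ, slack, Opt, Apt, Bpt,
          cpt, dpt, ept, spt]
        refine ⟨⟨?_, ?_, ?_⟩, ⟨?_, ?_, ?_⟩, ?_, ?_, ?_⟩ <;> linarith)
  · exact cone_mem w h ![(2, 0), (5, 3), (0, 2), (1, 4), (7, 0)] ![1, 3, 3, 3, 2]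
      ![vOOO, vBOB, vBBO, vBcc, vBAs]
      (by decide) (by norm_num [Fin.forall_fin_succ]) (by
        simp [slack] at hz
        simp [Fin.forall_fin_succ, Fin.sum_univ_succ, slack, Opt, Apt, Bpt,
          cpt, dpt, ept, spt]
        refine ⟨⟨?_, ?_, ?_⟩, ⟨?_, ?_, ?_⟩, ?_, ?_, ?_⟩ <;> linarith)
  · exact cone_mem w h ![(2, 2), (1, 4), (4, 1), (8, 2), (7, 2)] ![1, 2, 3, 1, 2]
      ![vOOO, vOAA, vOBB, vBBO, vsAs]
      (by decide) (by norm_num [Fin.forall_fin_succ]) (by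
        simp [slack] at hz
        simp [Fin.forall_fin_succ, Fin.sum_univ_succ, slack, Opt, Apt, Bpt,
          cpt, dpt, ept, spt]
        refine ⟨⟨?_, ?_, ?_⟩, ⟨?_, ?_, ?_⟩, ?_, ?_, ?_⟩ <;> linarith)
  · exact cone_mem w h ![(2, 2), (1, 2), (0, 4), (8, 4), (6, 2)] ![1, 2, 3, 1, 2]
      ![vOOO, vOAA, vOBB, vBBO, vsBA]
      (by decide) (by norm_num [Fin.forall_fin_succ]) (by
        simp [slack] at hz
        simp [Fin.forall_fin_succ, Fin.sum_univ_succ, slack, Opt, Apt, Bpt,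
          cpt, dpt, ept, spt]
        refine ⟨⟨?_, ?_, ?_⟩, ⟨?_, ?_, ?_⟩, ?_, ?_, ?_⟩ <;> linarith)
  · exact cone_mem w h ![(2, 2), (1, 4), (0, 2), (6, 2), (7, 4)] ![1, 2, 3, 2, 2]
      ![vOOO, vOAA, vOBB, vsAB, vsAs]
      (by decide) (by norm_num [Fin.forall_fin_succ]) (by
        simp [slack] at hz
        simp [Fin.forall_fin_succ, Fin.sum_univ_succ, slack, Opt, Apt, Bpt,
          cpt, dpt, ept, spt]
        refine ⟨⟨?_, ?_, ?_⟩, ⟨?_, ?_, ?_⟩, ?_, ?_, ?_⟩ <;> linarith)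
  · exact cone_mem w h ![(9, 3), (0, 2), (8, 3), (7, 1), (0, 4)] ![1, 3, 3, 4, 6]
      ![vOOO, vBBO, vBcc, veAd, vBAs]
      (by decide) (by norm_num [Fin.forall_fin_succ]) (by
        simp [slack] at hz
        simp [Fin.forall_fin_succ, Fin.sum_univ_succ, slack, Opt, Apt, Bpt,
          cpt, dpt, ept, spt]
        refine ⟨⟨?_, ?_, ?_⟩, ⟨?_, ?_, ?_⟩, ?_, ?_, ?_⟩ <;> linarith)
  · exact cone_mem w h ![(2, 2), (0, 2), (1, 4), (4, 1), (5, 3)] ![1, 3, 4, 6, 6]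
      ![vOOO, vBBO, veAd, vBAs, vsAs]
      (by decide) (by norm_num [Fin.forall_fin_succ]) (by
        simp [slack] at hz
        simp [Fin.forall_fin_succ, Fin.sum_univ_succ, slack, Opt, Apt, Bpt,
          cpt, dpt, ept, spt]
        refine ⟨⟨?_, ?_, ?_⟩, ⟨?_, ?_, ?_⟩, ?_, ?_, ?_⟩ <;> linarith)
  · exact cone_mem w h ![(2, 4), (1, 2), (4, 0), (8, 4), (7, 4)] ![1, 2, 3, 1, 2]
      ![vOOO, vOAA, vOBB, vBOB, vssA]
      (by decide) (by norm_num [Fin.forall_fin_succ]) (by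
        simp [slack] at hz
        simp [Fin.forall_fin_succ, Fin.sum_univ_succ, slack, Opt, Apt, Bpt,
          cpt, dpt, ept, spt]
        refine ⟨⟨?_, ?_, ?_⟩, ⟨?_, ?_, ?_⟩, ?_, ?_, ?_⟩ <;> linarith)
  · exact cone_mem w h ![(2, 4), (1, 4), (0, 2), (8, 2), (6, 4)] ![1, 2, 3, 1, 2]
      ![vOOO, vOAA, vOBB, vBOB, vsAB]
      (by decide) (by norm_num [Fin.forall_fin_succ]) (by
        simp [slack] at hz
        simp [Fin.forall_fin_succ, Fin.sum_univ_succ, slack, Opt, Apt, Bpt,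
          cpt, dpt, ept, spt]
        refine ⟨⟨?_, ?_, ?_⟩, ⟨?_, ?_, ?_⟩, ?_, ?_, ?_⟩ <;> linarith)
  · exact cone_mem w h ![(2, 4), (1, 2), (0, 4), (6, 4), (7, 2)] ![1, 2, 3, 2, 2]
      ![vOOO, vOAA, vOBB, vsBA, vssA]
      (by decide) (by norm_num [Fin.forall_fin_succ]) (by
        simp [slack] at hz
        simp [Fin.forall_fin_succ, Fin.sum_univ_succ, slack, Opt, Apt, Bpt,
          cpt, dpt, ept, spt]
        refine ⟨⟨?_, ?_, ?_⟩, ⟨?_, ?_, ?_⟩, ?_, ?_, ?_⟩ <;> linarith)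
  · exact cone_mem w h ![(9, 5), (0, 4), (8, 5), (7, 0), (0, 2)] ![1, 3, 3, 4, 6]
      ![vOOO, vBOB, vBcc, vedA, vBsA]
      (by decide) (by norm_num [Fin.forall_fin_succ]) (by
        simp [slack] at hz
        simp [Fin.forall_fin_succ, Fin.sum_univ_succ, slack, Opt, Apt, Bpt,
          cpt, dpt, ept, spt]
        refine ⟨⟨?_, ?_, ?_⟩, ⟨?_, ?_, ?_⟩, ?_, ?_, ?_⟩ <;> linarith)
  · exact cone_mem w h ![(2, 4), (0, 4), (1, 2), (4, 0), (5, 5)] ![1, 3, 4, 6, 6]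
      ![vOOO, vBOB, vedA, vBsA, vssA]
      (by decide) (by norm_num [Fin.forall_fin_succ]) (by
        simp [slack] at hz
        simp [Fin.forall_fin_succ, Fin.sum_univ_succ, slack, Opt, Apt, Bpt,
          cpt, dpt, ept, spt]
        refine ⟨⟨?_, ?_, ?_⟩, ⟨?_, ?_, ?_⟩, ?_, ?_, ?_⟩ <;> linarith)
  all_goals ((simp [slack, Opt, Apt, Bpt] at hpos) <;> norm_num at hpos)

/-- The list of all inequalities. -/
def all_list : List (Fin 10 × Fin 6) := (List.finRange 10).product (List.finRange 6)

theorem mem_all_list (i : Fin 10 × Fin 6) : i ∈ all_list := by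
  simp [all_list, List.product]

set_option maxHeartbeats 4000000 in
/-- Points with a tight inequality for the standard ordering of the qutrits. -/
theorem facet_mem (l : Fin 3 → Fin 3 → ℝ) (hb : EqualSums l) (h : ∀ i ∈ all_list, 0 ≤ slack i l)
    (k : Fin 10) (hk0 : k ≠ 0) (hk2 : k ≠ 2) (hz : slack (k, 0) l = 0) : l ∈ cornerCone := by
  have hbal := hb
  obtain ⟨b0, b1⟩ := hb
  fin_cases k
  · exact absurd rfl hk0
  · refine G18_mem l hbal ?_ fun i _ => h i (mem_all_list i)
    simp [slack] at hz
    linarith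
  · exact absurd rfl hk2
  · exact cone_mem l h ![(2, 0), (7, 1), (7, 0), (0, 4), (0, 2), (6, 0)] ![1, 2, 2, 3, 3, 3]
      ![vOOO, vAOA, vAAO, vBOB, vBBO, vBcc]
      (by decide) (by norm_num [Fin.forall_fin_succ]) (by
        simp [slack] at hz
        simp [Fin.forall_fin_succ, Fin.sum_univ_succ, slack, Opt, Apt, Bpt,
          cpt, dpt, ept, spt]
        refine ⟨⟨?_, ?_, ?_⟩, ⟨?_, ?_, ?_⟩, ?_, ?_, ?_⟩ <;> linarith)
  · exact cone_mem l h ![(2, 4), (8, 5), (1, 0), (0, 4), (6, 4), (0, 2)] ![1, 2, 2, 3, 4, 6]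
      ![vOOO, vOAA, vAOA, vBOB, vedA, vssA]
      (by decide) (by norm_num [Fin.forall_fin_succ]) (by
        simp [slack] at hz
        simp [Fin.forall_fin_succ, Fin.sum_univ_succ, slack, Opt, Apt, Bpt,
          cpt, dpt, ept, spt]
        refine ⟨⟨?_, ?_, ?_⟩, ⟨?_, ?_, ?_⟩, ?_, ?_, ?_⟩ <;> linarith)
  · exact cone_mem l h ![(9, 0), (1, 4), (0, 0), (8, 0), (7, 5), (0, 2)] ![1, 2, 3, 3, 4, 6]
      ![vOOO, vAOA, vBOB, vccB, vAde, vAsB]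
      (by decide) (by norm_num [Fin.forall_fin_succ]) (by
        simp [slack] at hz
        simp [Fin.forall_fin_succ, Fin.sum_univ_succ, slack, Opt, Apt, Bpt,
          cpt, dpt, ept, spt]
        refine ⟨⟨?_, ?_, ?_⟩, ⟨?_, ?_, ?_⟩, ?_, ?_, ?_⟩ <;> linarith)
  · exact cone_mem l h ![(2, 0), (1, 4), (1, 2), (4, 3), (4, 5), (3, 0)] ![1, 2, 2, 3, 3, 6]
      ![vOOO, vAOA, vAAO, vBOB, vBBO, vAss]
      (by decide) (by norm_num [Fin.forall_fin_succ]) (by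
        simp [slack] at hz
        simp [Fin.forall_fin_succ, Fin.sum_univ_succ, slack, Opt, Apt, Bpt,
          cpt, dpt, ept, spt]
        refine ⟨⟨?_, ?_, ?_⟩, ⟨?_, ?_, ?_⟩, ?_, ?_, ?_⟩ <;> linarith)
  · exact cone_mem l h ![(2, 0), (1, 0), (0, 4), (5, 5), (1, 2), (3, 0)] ![1, 2, 3, 3, 3, 6]
      ![vOOO, vAOA, vBOB, vBBO, vBcc, vBsA]
      (by decide) (by norm_num [Fin.forall_fin_succ]) (by
        simp [slack] at hz
        simp [Fin.forall_fin_succ, Fin.sum_univ_succ, slack, Opt, Apt, Bpt,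
          cpt, dpt, ept, spt]
        refine ⟨⟨?_, ?_, ?_⟩, ⟨?_, ?_, ?_⟩, ?_, ?_, ?_⟩ <;> linarith)
  · exact cone_mem l h ![(2, 0), (1, 4), (0, 0), (1, 2), (4, 5), (5, 0)] ![1, 2, 3, 4, 6, 6]
      ![vOOO, vAOA, vBOB, vAde, vAsB, vAss]
      (by decide) (by norm_num [Fin.forall_fin_succ]) (by
        simp [slack] at hz
        simp [Fin.forall_fin_succ, Fin.sum_univ_succ, slack, Opt, Apt, Bpt,
          cpt, dpt, ept, spt]
        refine ⟨⟨?_, ?_, ?_⟩, ⟨?_, ?_, ?_⟩, ?_, ?_, ?_⟩ <;> linarith)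
  · exact cone_mem l h ![(1, 4), (0, 0), (5, 0), (2, 0), (2, 4), (0, 2)] ![2, 3, 6, 3, 4, 6]
      ![vAOA, vBOB, vAAB, vccB, vAde, vAsB]
      (by decide) (by norm_num [Fin.forall_fin_succ]) (by
        simp [slack] at hz
        simp [Fin.forall_fin_succ, Fin.sum_univ_succ, slack, Opt, Apt, Bpt,
          cpt, dpt, ept, spt]
        refine ⟨⟨?_, ?_, ?_⟩, ⟨?_, ?_, ?_⟩, ?_, ?_, ?_⟩ <;> linarith)

theorem polytope_subset_cone (l : Fin 3 → Fin 3 → ℝ) (hb : EqualSums l)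
    (h : ∀ i, 0 ≤ slack i l) : l ∈ cornerCone := by
  have hv : ∀ k g, slack (k, g) vAAA = form k Apt Apt Apt := by
    intro k g
    fin_cases g <;> rfl
  have hA : ∀ k, 0 ≤ form k Apt Apt Apt := by
    intro k
    fin_cases k <;> simp [Apt] <;> norm_num
  refine pull all_list l vAAA (fun i _ => h i) (fun i _ => ?_)
    ⟨(1, 0), mem_all_list _, ?_⟩ ?_
  · rw [hv i.1 i.2]; exact hA i.1
  · rw [hv]; simp [Apt] <;> norm_num
  rintro t w hw h ⟨k, g⟩ - hpos hz
  have hb : EqualSums w := hw ▸ hb.sub_smul (by simp [EqualSums, Apt] <;> norm_num) t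
  rw [hv] at hpos
  refine mem_of_permQ g (facet_mem _ (hb.perm g) ?_ k ?_ ?_ hz)
  · rintro ⟨k', g'⟩ -
    obtain ⟨m, h1, h2, h3⟩ := permQ_comp g g'
    have := h (k', m) (mem_all_list _)
    simp only [slack] at this ⊢
    rwa [h1, h2, h3]
  · rintro rfl
    simp [Apt] at hpos
  · rintro rfl
    simp [Apt] at hpos

/-- The polytope in terms of slacks. -/
def polytope : Set (Fin 3 → Fin 3 → ℝ) :=
  {l | (∀ a, l a 0 + l a 1 + l a 2 = 1) ∧ ∀ i, 0 ≤ slack i l}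

theorem polytope_convex : Convex ℝ polytope := by
  rintro x ⟨hx1, hx2⟩ y ⟨hy1, hy2⟩ s t hs ht hst
  refine ⟨fun a => ?_, fun i => ?_⟩
  · simp only [Pi.add_apply, Pi.smul_apply, smul_eq_mul]
    linear_combination s * hx1 a + t * hy1 a + hst
  · rw [slack_comb]
    exact add_nonneg (mul_nonneg hs (hx2 i)) (mul_nonneg ht (hy2 i))

set_option maxHeartbeats 4000000 in
theorem cornerPts_subset : cornerPts ⊆ polytope := by
  intro q hq
  simp only [cornerPts, Set.mem_insert_iff, Set.mem_singleton_iff] at hq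
  refine ⟨fun a => ?_, ?_⟩
  · rcases hq with rfl | rfl | rfl | rfl | rfl | rfl | rfl | rfl | rfl | rfl | rfl <;>
      fin_cases a <;> simp [Opt, Apt, Bpt] <;> norm_num
  · rintro ⟨k, g⟩
    rcases hq with rfl | rfl | rfl | rfl | rfl | rfl | rfl | rfl | rfl | rfl | rfl <;>
      fin_cases k <;> fin_cases g <;>
      simp [slack, Opt, Apt, Bpt] <;> norm_num

theorem polytope_perm (σ : Equiv.Perm (Fin 3)) {l : Fin 3 → Fin 3 → ℝ} (hl : l ∈ polytope) :
    (fun a => l (σ a)) ∈ polytope := by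
  refine ⟨fun a => hl.1 (σ a), ?_⟩
  rintro ⟨k, g⟩
  obtain ⟨n1, n2, n3⟩ := permQ_ne g
  obtain ⟨m, h1, h2, h3⟩ := permQ_surj (σ (fstQ g)) (σ (sndQ g)) (σ (trdQ g))
    (σ.injective.ne n1) (σ.injective.ne n2) (σ.injective.ne n3)
  have := hl.2 (k, m)
  simp only [slack] at this ⊢
  rwa [h1, h2, h3] at this

theorem polytope_eq_hull : polytope = convexHull ℝ cornerSet := by
  apply Set.Subset.antisymm
  · rintro l hl
    have hb : EqualSums l := ⟨by rw [hl.1 0, hl.1 1], by rw [hl.1 1, hl.1 2]⟩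
    obtain ⟨t, -, k, hk, rfl⟩ := polytope_subset_cone l hb hl.2
    have hsub : convexHull ℝ cornerSet ⊆ {x | x 0 0 + x 0 1 + x 0 2 = 1} := by
      refine convexHull_min ?_ ?_
      · rintro _ ⟨σ, q, hq, rfl⟩
        exact (cornerPts_subset hq).1 (σ 0)
      · rintro x hx y hy s t hs ht hst
        simp only [Set.mem_setOf_eq, Pi.add_apply, Pi.smul_apply, smul_eq_mul] at hx hy ⊢
        linear_combination s * hx + t * hy + hst
    have h1 := hl.1 0
    have h2 : k 0 0 + k 0 1 + k 0 2 = 1 := hsub hk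
    simp only [Pi.smul_apply, smul_eq_mul] at h1
    have ht : t = 1 := by linear_combination h1 - t * h2
    rwa [ht, one_smul]
  · refine convexHull_min ?_ polytope_convex
    rintro _ ⟨σ, q, hq, rfl⟩
    exact polytope_perm σ (cornerPts_subset hq)

/-- Theorem 2: the polytope `S` cut out by the ordering and normalization constraints
together with the seven families of inequalities is the convex hull of the eleven corner
points and their images under qutrit permutations. -/
theorem corner_point_representation :
    {l : Fin 3 → Fin 3 → ℝ |
        (∀ a, 0 ≤ l a 0 ∧ l a 0 ≤ l a 1 ∧ l a 1 ≤ l a 2 ∧ l a 0 + l a 1 + l a 2 = 1) ∧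
        (∀ a b c : Fin 3, a ≠ b → a ≠ c → b ≠ c →
          (l a 1 + l a 0 ≤ l b 1 + l b 0 + l c 1 + l c 0) ∧
          (l a 2 + l a 0 ≤ l b 1 + l b 0 + l c 2 + l c 0) ∧
          (l a 1 + l a 2 ≤ l b 1 + l b 0 + l c 1 + l c 2) ∧
          (2 * l a 1 + l a 0 ≤ 2 * l b 1 + l b 0 + 2 * l c 1 + l c 0) ∧
          (2 * l a 0 + l a 1 ≤ 2 * l b 1 + l b 0 + 2 * l c 0 + l c 1) ∧
          (2 * l a 1 + l a 2 ≤ 2 * l b 1 + l b 0 + 2 * l c 1 + l c 2) ∧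
          (2 * l a 1 + l a 2 ≤ 2 * l b 0 + l b 1 + 2 * l c 2 + l c 1))} =
      convexHull ℝ
        {p : Fin 3 → Fin 3 → ℝ |
          ∃ σ : Equiv.Perm (Fin 3), ∃ q ∈ cornerPts, p = fun a => q (σ a)} := by
  refine Eq.trans ?_ polytope_eq_hull
  ext l
  constructor
  · rintro ⟨h1, h2⟩
    refine ⟨fun a => (h1 a).2.2.2, ?_⟩
    rintro ⟨k, g⟩
    obtain ⟨n1, n2, n3⟩ := permQ_ne g
    obtain ⟨f1, f2, f3, f4, f5, f6, f7⟩ := h2 _ _ _ n1 n2 n3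
    obtain ⟨g1, g2, g3, g4⟩ := h1 (fstQ g)
    fin_cases k <;> simp [slack] <;> linarith
  · rintro ⟨h1, h2⟩
    refine ⟨fun a => ?_, fun a b c hab hac hbc => ?_⟩
    · obtain ⟨g, rfl⟩ : ∃ g, fstQ g = a := by revert a; decide
      have g0 := h2 (0, g)
      have g1 := h2 (1, g)
      have g2 := h2 (2, g)
      simp [slack] at g0 g1 g2
      exact ⟨g0, by linarith, by linarith, h1 _⟩
    · obtain ⟨g, rfl, rfl, rfl⟩ := permQ_surj a b c hab hac hbc
      have f1 := h2 (3, g)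
      have f2 := h2 (4, g)
      have f3 := h2 (5, g)
      have f4 := h2 (6, g)
      have f5 := h2 (7, g)
      have f6 := h2 (8, g)
      have f7 := h2 (9, g)
      simp [slack] at f1 f2 f3 f4 f5 f6 f7
      refine ⟨?_, ?_, ?_, ?_, ?_, ?_, ?_⟩ <;> linarith
end
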